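/- arXiv:2601.05340 — 3 statements merged into one kernel-verified Lean document; each statement's English description precedes it below -/
import Mathlib

section
/- Under the Tanner graph setup, if the girth g of G satisfies g ≥ 6, then the number of 10-cycles satisfies N_10 = −4(q1+q2)·N_8 − 3·(2(q1+q2)² + q1·q2)·N_6 + (T_5 − |E|·A_10)/10, with A_10 as defined in the context. -/
/-!
Let `A` be the adjacency matrix of the Tanner graph `G`, `Q` its degree matrix minus the identity,
and `W` the non-backtracking matrix on the darts of `G`. The trace of `W ^ L` counts rooted closed
walks of length `L` that nowhere backtrack, not even at the root. If such a walk visits a vertex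
twice, it splits into two non-backtracking returns, each of length at least the girth; so for
`L < 12` every such walk is a cycle, and `trace (W ^ L)` is the number of rooted oriented cycles of
length `L` (`trace_nbMat_pow_eq_cycleCount`). In particular it vanishes for `L = 2` and `L = 4`.

On the other hand `W = T * S - J`, where `S` and `T` are the vertex-dart incidence matrices and `J`
is dart reversal. This gives the recursion `B (k + 2) = A * B (k + 1) - Q * B k` for the matrices
`B k` of non-backtracking walks of length `k + 1` (`nbWalkMat_add_two`), together with
`trace (W ^ (k + 3)) = trace (B (k + 2)) - trace (Q * B k) + trace (W ^ (k + 1))`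
(`trace_nbMat_pow`). In the biregular bipartite case `A * Q + Q * A = s • A` and
`Q * Q = s • Q - c • 1` with `s = q1 + q2` and `c = q1 * q2`, so the recursion has an explicit
solution in terms of `A ^ j` and `Q * A ^ j` (`nb_closed_form`), whose traces for even `j > 0` are
`2 * T` and `s * T` with `T = trace ((H * Hᵀ) ^ (j / 2))`. The traces of `W ^ 4`, `W ^ 6`, `W ^ 8`
and `W ^ 10` thus become linear forms in the traces of powers of `H * Hᵀ`; eliminating the second,
third and fourth powers leaves the stated formula.
-/

open Matrix Finset

/-- The Tanner graph of a real matrix `H`: the simple bipartite graph on `α ⊕ β`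
in which check node `i` is adjacent to variable node `j` iff `H i j = 1`. -/
def tannerGraph {α β : Type*} (H : Matrix α β ℝ) : SimpleGraph (α ⊕ β) :=
  SimpleGraph.fromRel (fun u v => ∃ i j, u = Sum.inl i ∧ v = Sum.inr j ∧ H i j = 1)

/-- The number of pairs `(v, w)` where `w` is a closed walk of length `l` based at `v`
that is a cycle. -/
noncomputable def cycleCount {V : Type*} (G : SimpleGraph V) (l : ℕ) : ℕ :=
  Nat.card {p : Σ v : V, G.Walk v v // p.2.length = l ∧ p.2.IsCycle}

/-- `N_{2k}`: the number of cycles of length `2k` in `G`, as a real number. -/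
noncomputable def numCycles {V : Type*} (G : SimpleGraph V) (k : ℕ) : ℝ :=
  (cycleCount G (2 * k) : ℝ) / (4 * k)

/-! ### Traces of powers count closed sequences -/

/-- Sequences of `L` steps along the relation `r` from `x` to `y`, encoded as functions on `ℕ`
that are constant equal to `y` from index `L` on. -/
abbrev RelPath {D : Type*} (r : D → D → Prop) (L : ℕ) (x y : D) : Type _ :=
  {g : ℕ → D // g 0 = x ∧ (∀ i < L, r (g i) (g (i + 1))) ∧ ∀ i, L ≤ i → g i = y}

/-- Rooted closed sequences of `L` steps along `r`, encoded as `L`-periodic functions on `ℕ`. -/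
abbrev RelCycle {D : Type*} (r : D → D → Prop) (L : ℕ) : Type _ :=
  {g : ℕ → D // (∀ i, g (i + L) = g i) ∧ ∀ i, r (g i) (g (i + 1))}

/-- Splitting off the first step of a sequence. -/
def relPathSuccEquiv {D : Type*} (r : D → D → Prop) (L : ℕ) (x y : D) :
    RelPath r (L + 1) x y ≃ Σ z : {z // r x z}, RelPath r L z y where
  toFun g := ⟨⟨g.1 1, by have := g.2.2.1 0 (by omega); rwa [g.2.1] at this⟩,
    ⟨fun i => g.1 (i + 1), rfl, fun i hi => g.2.2.1 (i + 1) (by omega),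
      fun i hi => g.2.2.2 (i + 1) (by omega)⟩⟩
  invFun p := ⟨fun i => Nat.casesOn i x p.2.1, rfl, by
      rintro (_ | i) hi
      · have := p.1.2
        simpa [p.2.2.1] using this
      · exact p.2.2.2.1 i (by omega), by
      rintro (_ | i) hi
      · omega
      · exact p.2.2.2.2 i (by omega)⟩
  left_inv g := by
    apply Subtype.ext
    funext i
    cases i with
    | zero => exact g.2.1.symm
    | succ i => rfl
  right_inv := by
    rintro ⟨⟨z, hz⟩, ⟨g, h0, h1, h2⟩⟩
    change g 0 = z at h0
    subst h0
    rfl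

/-- The power `M ^ L` of a 0/1 matrix counts the sequences of `L` steps along its relation;
finiteness is carried along because `Nat.card` of an infinite type is zero. -/
lemma relPath_card {D : Type*} [Fintype D] [DecidableEq D] (r : D → D → Prop) [DecidableRel r]
    (L : ℕ) : ∀ x y : D, Finite (RelPath r L x y) ∧
    ((Matrix.of fun a b => if r a b then (1 : ℝ) else 0) ^ L) x y =
      (Nat.card (RelPath r L x y) : ℝ) := by
  induction L with
  | zero =>
    intro x y
    have key : ∀ g : RelPath r 0 x y, g.1 = fun _ => y := fun g =>
      funext fun i => g.2.2.2 i (Nat.zero_le i)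
    have : Subsingleton (RelPath r 0 x y) :=
      ⟨fun g h => Subtype.ext ((key g).trans (key h).symm)⟩
    refine ⟨inferInstance, ?_⟩
    by_cases h : x = y
    · have : Nonempty (RelPath r 0 x y) := ⟨⟨fun _ => y, h.symm, by simp, by simp⟩⟩
      rw [Nat.card_unique]
      simp [h]
    · have : IsEmpty (RelPath r 0 x y) := ⟨fun g => h (by
        have h1 := g.2.1
        rw [key g] at h1
        exact h1.symm)⟩
      simp [h]
  | succ L ih =>
    intro x y
    have : ∀ z : {z // r x z}, Finite (RelPath r L z y) := fun z => (ih z y).1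
    refine ⟨Finite.of_equiv _ (relPathSuccEquiv r L x y).symm, ?_⟩
    rw [Nat.card_congr (relPathSuccEquiv r L x y), Nat.card_sigma, pow_succ', Matrix.mul_apply]
    simp only [(ih _ _).2, Matrix.of_apply, ite_mul, one_mul, zero_mul]
    rw [← Finset.sum_filter]
    push_cast
    exact Finset.sum_subtype _ (by simp) _

/-- Closing up: a sequence of `L` steps from a point to itself extends periodically. -/
def relCycleEquiv {D : Type*} (r : D → D → Prop) (L : ℕ) (hL : 0 < L) :
    (Σ x, RelPath r L x x) ≃ RelCycle r L where
  toFun p := ⟨fun i => p.2.1 (i % L), by simp, by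
    intro i
    have hi := Nat.mod_lt i hL
    have h := p.2.2.2.1 (i % L) hi
    beta_reduce
    rw [← Nat.mod_add_mod]
    rcases Nat.lt_or_ge (i % L + 1) L with h' | h'
    · rwa [Nat.mod_eq_of_lt h']
    · have h2 : (i % L + 1) % L = 0 := by
        rw [show i % L + 1 = L by omega, Nat.mod_self]
      rw [h2, p.2.2.1]
      rwa [p.2.2.2.2 _ h'] at h⟩
  invFun h := ⟨h.1 0, fun i => h.1 (min i L), by simp, fun i hi => by
      beta_reduce
      rw [min_eq_left hi.le, min_eq_left (Nat.succ_le_of_lt hi)]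
      exact h.2.2 i, fun i hi => by
      have := h.2.1 0
      beta_reduce
      rw [min_eq_right hi]
      simpa using this⟩
  left_inv := by
    have ext : ∀ p q : Σ x, RelPath r L x x, p.2.1 = q.2.1 → p = q := by
      rintro ⟨x, g, hg⟩ ⟨y, g', hg'⟩ e
      change g = g' at e
      subst e
      obtain rfl : x = y := hg.1.symm.trans hg'.1
      rfl
    rintro ⟨x, ⟨g, h0, h1, h2⟩⟩
    apply ext
    funext i
    change g (min i L % L) = g i
    rcases Nat.lt_or_ge i L with h' | h'
    · rw [min_eq_left h'.le, Nat.mod_eq_of_lt h']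
    · rw [min_eq_right h', Nat.mod_self, h2 i h', h0]
  right_inv := by
    rintro ⟨g, h1, h2⟩
    apply Subtype.ext
    funext i
    have hp : Function.Periodic g L := h1
    simp only
    rw [min_eq_left (Nat.mod_lt i hL).le, hp.map_mod_nat]

lemma trace_pow_eq_card {D : Type*} [Fintype D] [DecidableEq D] (r : D → D → Prop)
    [DecidableRel r] (L : ℕ) (hL : 0 < L) :
    ((Matrix.of fun a b => if r a b then (1 : ℝ) else 0) ^ L).trace =
      (Nat.card (RelCycle r L) : ℝ) := by
  have : ∀ z, Finite (RelPath r L z z) := fun z => (relPath_card r L z z).1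
  rw [← Nat.card_congr (relCycleEquiv r L hL), Nat.card_sigma, Matrix.trace]
  simp only [Matrix.diag_apply, (relPath_card r L _ _).2]
  push_cast
  rfl

/-! ### Non-backtracking closed walks shorter than twice the girth -/

/-- The dart `e` continues the dart `d` without backtracking. -/
def NBRel {V : Type*} (G : SimpleGraph V) (d e : G.Dart) : Prop :=
  d.snd = e.fst ∧ e ≠ d.symm

/-- Rooted closed walks of length `L` without backtracking, also across the root, encoded as
`L`-periodic vertex sequences. -/
abbrev NBSeq {V : Type*} (G : SimpleGraph V) (L : ℕ) : Type _ :=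
  {f : ℕ → V // (∀ i, f (i + L) = f i) ∧ (∀ i, G.Adj (f i) (f (i + 1))) ∧
    ∀ i, f i ≠ f (i + 2)}

/-- A closed sequence of darts is determined by its sequence of initial vertices. -/
def nbSeqEquiv {V : Type*} (G : SimpleGraph V) (L : ℕ) : RelCycle (NBRel G) L ≃ NBSeq G L where
  toFun g := ⟨fun i => (g.1 i).fst, fun i => by simp only [g.2.1], fun i => by
      beta_reduce; rw [← (g.2.2 i).1]; exact (g.1 i).adj, fun i h => by
      refine (g.2.2 i).2 (SimpleGraph.Dart.ext _ _ (Prod.ext (g.2.2 i).1.symm ?_))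
      change (g.1 (i + 1)).snd = (g.1 i).fst
      rw [(g.2.2 (i + 1)).1]
      exact h.symm⟩
  invFun f := ⟨fun i => ⟨(f.1 i, f.1 (i + 1)), f.2.2.1 i⟩, fun i => by
      apply SimpleGraph.Dart.ext
      have h2 := f.2.1 (i + 1)
      have e : i + L + 1 = i + 1 + L := by omega
      simp only [f.2.1, e], fun i => ⟨rfl, fun h => f.2.2.2 i (by
      have := congrArg (fun d : G.Dart => d.snd) h
      exact this.symm)⟩⟩
  left_inv g := by
    apply Subtype.ext
    funext i
    exact SimpleGraph.Dart.ext _ _ (Prod.ext rfl (g.2.2 i).1.symm)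
  right_inv f := rfl

/-- The walk of length `k` along a vertex sequence `f`, starting at index `a`. -/
def seqWalk {V : Type*} {G : SimpleGraph V} (f : ℕ → V) (hf : ∀ i, G.Adj (f i) (f (i + 1)))
    (a : ℕ) : (k : ℕ) → G.Walk (f a) (f (a + k))
  | 0 => SimpleGraph.Walk.nil
  | k + 1 => (seqWalk f hf a k).concat (hf (a + k))

@[simp] lemma seqWalk_length {V : Type*} {G : SimpleGraph V} (f : ℕ → V)
    (hf : ∀ i, G.Adj (f i) (f (i + 1))) (a k : ℕ) : (seqWalk f hf a k).length = k := by
  induction k with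
  | zero => rfl
  | succ k ih => simp [seqWalk, ih]

lemma seqWalk_getVert {V : Type*} {G : SimpleGraph V} (f : ℕ → V)
    (hf : ∀ i, G.Adj (f i) (f (i + 1))) (a k i : ℕ) (hi : i ≤ k) :
    (seqWalk f hf a k).getVert i = f (a + i) := by
  induction k with
  | zero =>
    obtain rfl : i = 0 := by omega
    rfl
  | succ k ih =>
    rcases Nat.lt_or_ge k i with h | h
    · obtain rfl : i = k + 1 := by omega
      have := (seqWalk f hf a (k + 1)).getVert_length
      rwa [seqWalk_length] at this
    · rw [seqWalk, SimpleGraph.Walk.concat_eq_append, SimpleGraph.Walk.getVert_append]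
      rw [seqWalk_length]
      split_ifs with h'
      · exact ih h
      · obtain rfl : i = k := by omega
        simp

lemma isCycle_of_injOn {V : Type*} {G : SimpleGraph V} (f : ℕ → V)
    (hf : ∀ i, G.Adj (f i) (f (i + 1))) (a k : ℕ) (hk : 3 ≤ k) (h : f (a + k) = f a)
    (hinj : ∀ i j, a ≤ i → i < j → j < a + k → f i ≠ f j) :
    ((seqWalk f hf a k).copy rfl h).IsCycle := by
  rw [SimpleGraph.Walk.isCycle_iff_isPath_tail_and_le_length]
  refine ⟨?_, by simpa using hk⟩
  rw [← SimpleGraph.Walk.IsPath.getVert_injOn_iff]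
  set w := (seqWalk f hf a k).copy rfl h with hw
  have hl : w.length = k := by simp [hw]
  have hlt : w.tail.length = k - 1 := by
    have := SimpleGraph.Walk.length_tail_add_one (p := w)
      (by rw [SimpleGraph.Walk.not_nil_iff_lt_length]; omega)
    omega
  have hv : ∀ i, i ≤ k - 1 → w.tail.getVert i = f (a + (i + 1)) := by
    intro i hi
    rw [SimpleGraph.Walk.getVert_tail, hw, SimpleGraph.Walk.getVert_copy,
      seqWalk_getVert _ _ _ _ _ (by omega)]
  have aux : ∀ i j, i < j → j ≤ k - 1 → f (a + (i + 1)) ≠ f (a + (j + 1)) := by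
    intro i j hij hj
    rcases Nat.lt_or_ge (j + 1) k with h' | h'
    · exact hinj _ _ (by omega) (by omega) (by omega)
    · have : j + 1 = k := by omega
      rw [this, h]
      exact (hinj a _ le_rfl (by omega) (by omega)).symm
  intro i hi j hj hij
  simp only [Set.mem_ofPred_eq, hlt] at hi hj
  rw [hv i hi, hv j hj] at hij
  rcases lt_trichotomy i j with h' | h' | h'
  · exact absurd hij (aux i j h' hj)
  · exact h'
  · exact absurd hij.symm (aux j i h' hi)

/-- A non-backtracking sequence that returns to a vertex after `k` steps contains a cycle of
length at most `k`: a return of minimal length has no repeated vertex in between. -/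
lemma egirth_le_of_return {V : Type*} {G : SimpleGraph V} (f : ℕ → V)
    (hf : ∀ i, G.Adj (f i) (f (i + 1))) (hnb : ∀ i, f i ≠ f (i + 2)) (k : ℕ) :
    ∀ a, 0 < k → f (a + k) = f a → G.egirth ≤ k := by
  induction k using Nat.strong_induction_on with
  | _ k ih =>
    intro a hk h
    by_cases hinj : ∀ i j, a ≤ i → i < j → j < a + k → f i ≠ f j
    · have h1 : k ≠ 1 := by
        rintro rfl
        exact (hf a).ne h.symm
      have h2 : k ≠ 2 := by
        rintro rfl
        exact hnb a h.symm
      have := SimpleGraph.egirth_le_length (isCycle_of_injOn f hf a k (by omega) h hinj)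
      simpa using this
    · push Not at hinj
      obtain ⟨i, j, hi, hij, hj, e⟩ := hinj
      have := ih (j - i) (by omega) i (by omega) (by rw [show i + (j - i) = j by omega, e])
      exact this.trans (by exact_mod_cast (by omega : j - i ≤ k))

/-- Below twice the girth, closed non-backtracking walks are exactly the cycles: a repeated vertex
would split the closed walk into two returns, each at least as long as the girth. -/
lemma card_nbSeq {V : Type*} {G : SimpleGraph V} (g L : ℕ) (hg : (g : ℕ∞) ≤ G.egirth)
    (hL : 0 < L) (hLg : L < 2 * g) : Nat.card (NBSeq G L) = cycleCount G L := by
  symm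
  have hper : ∀ (p : Σ v : V, G.Walk v v), p.2.length = L → ∀ i,
      p.2.getVert ((i + 1) % L) = p.2.getVert (i % L + 1) := by
    intro p hp i
    have hi := Nat.mod_lt i hL
    rcases Nat.lt_or_ge (i % L + 1) L with h' | h'
    · rw [← Nat.mod_add_mod, Nat.mod_eq_of_lt h']
    · have : i % L + 1 = L := by omega
      rw [← Nat.mod_add_mod, this, Nat.mod_self, SimpleGraph.Walk.getVert_zero, ← hp,
        SimpleGraph.Walk.getVert_length]
  refine Nat.card_eq_of_bijective
    (fun p : {p : Σ v : V, G.Walk v v // p.2.length = L ∧ p.2.IsCycle} =>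
      (⟨fun i => p.1.2.getVert (i % L), by simp, fun i => ?_, fun i => ?_⟩ : NBSeq G L)) ⟨?_, ?_⟩
  · beta_reduce
    rw [hper _ p.2.1]
    exact p.1.2.adj_getVert_succ (by rw [p.2.1]; exact Nat.mod_lt i hL)
  · have h3 := p.2.2.three_le_length
    intro h
    have hm : i % L ≤ p.1.2.length - 1 := by have := Nat.mod_lt i hL; rw [p.2.1]; omega
    have hm' : (i + 2) % L ≤ p.1.2.length - 1 := by
      have := Nat.mod_lt (i + 2) hL; rw [p.2.1]; omega
    have e := p.2.2.getVert_injOn' hm hm' h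
    have e' : i + 0 ≡ i + 2 [MOD L] := e
    have := Nat.ModEq.add_left_cancel' i e'
    rw [Nat.ModEq, Nat.zero_mod, Nat.mod_eq_of_lt (by rw [p.2.1] at h3; omega)] at this
    omega
  · rintro ⟨⟨u, p⟩, hp, hpc⟩ ⟨⟨v, q⟩, hq, hqc⟩ h
    have h' : ∀ i, p.getVert (i % L) = q.getVert (i % L) := fun i =>
      congrFun (congrArg Subtype.val h) i
    obtain rfl : u = v := by simpa using h' 0
    have : p = q := by
      simp only at hp hq
      refine SimpleGraph.Walk.ext_getVert_le_length (hp.trans hq.symm) fun k hk => ?_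
      rcases Nat.lt_or_ge k L with h1 | h1
      · simpa [Nat.mod_eq_of_lt h1] using h' k
      · rw [SimpleGraph.Walk.getVert_of_length_le _ (by omega),
          SimpleGraph.Walk.getVert_of_length_le _ (by omega)]
    subst this
    rfl
  · rintro ⟨f, hp, hf, hnb⟩
    have h3 : 3 ≤ L := by
      have := SimpleGraph.three_le_egirth.trans
        (egirth_le_of_return f hf hnb L 0 hL (hp 0))
      exact_mod_cast this
    have hinj : ∀ i j, 0 ≤ i → i < j → j < 0 + L → f i ≠ f j := by
      intro i j _ hij hj e
      have h1 := hg.trans (egirth_le_of_return f hf hnb (j - i) i (by omega)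
        (by rw [show i + (j - i) = j by omega, e]))
      have h2 := hg.trans (egirth_le_of_return f hf hnb (i + L - j) j (by omega)
        (by rw [show j + (i + L - j) = i + L by omega, hp, e]))
      have h1' : g ≤ j - i := by exact_mod_cast h1
      have h2' : g ≤ i + L - j := by exact_mod_cast h2
      omega
    have hc := isCycle_of_injOn f hf 0 L h3 (hp 0) hinj
    refine ⟨⟨⟨f 0, (seqWalk f hf 0 L).copy rfl (hp 0)⟩, by simp, hc⟩, ?_⟩
    apply Subtype.ext
    funext i
    have hpp : Function.Periodic f L := hp
    simp only [SimpleGraph.Walk.getVert_copy]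
    rw [seqWalk_getVert _ _ _ _ _ (Nat.mod_lt i hL).le, zero_add, hpp.map_mod_nat]

lemma cycleCount_eq_zero {V : Type*} {G : SimpleGraph V} (g L : ℕ) (hg : (g : ℕ∞) ≤ G.egirth)
    (hLg : L < g) : cycleCount G L = 0 := by
  have : IsEmpty {p : Σ v : V, G.Walk v v // p.2.length = L ∧ p.2.IsCycle} := ⟨fun p => by
    have h := hg.trans (SimpleGraph.egirth_le_length p.2.2)
    have h' : g ≤ p.1.2.length := by exact_mod_cast h
    rw [p.2.1] at h'
    omega⟩
  rw [cycleCount, Nat.card_of_isEmpty]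

/-! ### The non-backtracking matrix of a graph -/

section NonBacktracking

variable {V : Type*} [Fintype V] [DecidableEq V] (G : SimpleGraph V) [DecidableRel G.Adj]

instance : DecidableRel (NBRel G) := fun _ _ => inferInstanceAs (Decidable (_ ∧ _))

/-- The non-backtracking (Hashimoto) matrix, indexed by darts. -/
def nbMat : Matrix G.Dart G.Dart ℝ := Matrix.of fun d e => if NBRel G d e then 1 else 0

/-- Incidence of vertices with the darts leaving them. -/
def startMat : Matrix V G.Dart ℝ := Matrix.of fun v d => if d.fst = v then 1 else 0

/-- Incidence of darts with the vertices they enter. -/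
def endMat : Matrix G.Dart V ℝ := Matrix.of fun d v => if d.snd = v then 1 else 0

/-- The permutation matrix of dart reversal. -/
def revMat : Matrix G.Dart G.Dart ℝ := Matrix.of fun d e => if d.symm = e then 1 else 0

/-- The matrix counting non-backtracking walks of length `k + 1` between vertices; these may
backtrack at the root when closed. -/
def nbWalkMat (k : ℕ) : Matrix V V ℝ := startMat G * nbMat G ^ k * endMat G

lemma nbMat_eq : nbMat G = endMat G * startMat G - revMat G := by
  ext d e
  simp only [nbMat, endMat, startMat, revMat, Matrix.sub_apply, Matrix.mul_apply, Matrix.of_apply,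
    ite_mul, one_mul, zero_mul, Finset.sum_ite_eq, Finset.mem_univ, if_true, NBRel]
  by_cases h : d.symm = e
  · subst h
    simp
  · simp [h, Ne.symm h, eq_comm]

lemma revMat_mul {κ : Type*} (M : Matrix G.Dart κ ℝ) (d : G.Dart) (x : κ) :
    (revMat G * M) d x = M d.symm x := by
  simp [revMat, Matrix.mul_apply]

lemma mul_revMat {κ : Type*} (M : Matrix κ G.Dart ℝ) (d : G.Dart) (x : κ) :
    (M * revMat G) x d = M x d.symm := by
  simp only [revMat, Matrix.mul_apply, Matrix.of_apply, mul_ite, mul_one, mul_zero]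
  rw [Finset.sum_eq_single d.symm]
  · simp
  · intro e _ he
    rw [if_neg]
    rintro rfl
    simp at he
  · simp

lemma startMat_mul_revMat : startMat G * revMat G = (endMat G)ᵀ := by
  ext v d
  rw [mul_revMat]
  rfl

lemma endMat_transpose_mul_revMat : (endMat G)ᵀ * revMat G = startMat G := by
  ext v d
  rw [mul_revMat]
  rfl

lemma revMat_mul_revMat : revMat G * revMat G = 1 := by
  ext d e
  rw [revMat_mul]
  simp [revMat, Matrix.one_apply]

lemma startMat_mul_endMat : startMat G * endMat G = G.adjMatrix ℝ := by
  ext v w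
  simp only [startMat, endMat, Matrix.mul_apply, Matrix.of_apply, ite_mul, one_mul, zero_mul,
    SimpleGraph.adjMatrix_apply]
  simp only [← ite_and]
  rw [Finset.sum_boole]
  by_cases h : G.Adj v w
  · have : ({d | d.fst = v ∧ d.snd = w} : Finset G.Dart) = {⟨(v, w), h⟩} := by
      ext d
      simp [SimpleGraph.Dart.ext_iff, Prod.ext_iff]
    rw [this]
    simp [h]
  · have : ({d | d.fst = v ∧ d.snd = w} : Finset G.Dart) = ∅ := by
      ext d
      simp only [Finset.mem_filter, Finset.mem_univ, true_and, Finset.notMem_empty, iff_false]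
      rintro ⟨rfl, rfl⟩
      exact h d.adj
    rw [this]
    simp [h]

lemma endMat_transpose_mul_endMat : (endMat G)ᵀ * endMat G = G.degMatrix ℝ := by
  ext v w
  simp only [endMat, Matrix.mul_apply, Matrix.of_apply, Matrix.transpose_apply, ite_mul, one_mul,
    zero_mul, SimpleGraph.degMatrix, Matrix.diagonal_apply]
  simp only [← ite_and]
  rw [Finset.sum_boole]
  split_ifs with h
  · subst h
    rw [← G.dart_fst_fiber_card_eq_degree v]
    norm_cast
    refine Finset.card_bij (fun d _ => d.symm) ?_ ?_ ?_
    · simp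
    · intro a _ b _ h
      exact SimpleGraph.Dart.symm_involutive.injective h
    · intro b hb
      exact ⟨b.symm, by simpa using hb, by simp⟩
  · norm_cast
    rw [Finset.card_eq_zero]
    ext d
    simp only [Finset.mem_filter, Finset.mem_univ, true_and, Finset.notMem_empty, iff_false]
    rintro ⟨rfl, h'⟩
    exact h h'

/-- The left side counts the non-backtracking walks of length `k + 1` into `w` preceded by a dart
into the starting vertex `v` that the first step does not reverse; there are `deg v - 1` of these. -/
lemma endMat_transpose_mul_pow (k : ℕ) :
    (endMat G)ᵀ * nbMat G ^ (k + 1) * endMat G = (G.degMatrix ℝ - 1) * nbWalkMat G k := by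
  have h : (endMat G)ᵀ * nbMat G = (G.degMatrix ℝ - 1) * startMat G := by
    rw [nbMat_eq, Matrix.mul_sub, ← Matrix.mul_assoc, endMat_transpose_mul_endMat,
      endMat_transpose_mul_revMat, Matrix.sub_mul, Matrix.one_mul]
  rw [pow_succ', ← Matrix.mul_assoc, h, nbWalkMat]
  simp only [Matrix.mul_assoc]

lemma nbWalkMat_zero : nbWalkMat G 0 = G.adjMatrix ℝ := by
  rw [nbWalkMat, pow_zero, Matrix.mul_one, startMat_mul_endMat]

lemma nbWalkMat_succ (k : ℕ) : nbWalkMat G (k + 1) =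
    G.adjMatrix ℝ * nbWalkMat G k - (endMat G)ᵀ * nbMat G ^ k * endMat G := by
  have h : startMat G * nbMat G = G.adjMatrix ℝ * startMat G - (endMat G)ᵀ := by
    rw [nbMat_eq, Matrix.mul_sub, ← Matrix.mul_assoc, startMat_mul_endMat, startMat_mul_revMat]
  rw [nbWalkMat, pow_succ', ← Matrix.mul_assoc, h, Matrix.sub_mul, Matrix.sub_mul, nbWalkMat]
  simp only [Matrix.mul_assoc]

lemma nbWalkMat_one : nbWalkMat G 1 = G.adjMatrix ℝ * G.adjMatrix ℝ - G.degMatrix ℝ := by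
  rw [nbWalkMat_succ, nbWalkMat_zero, pow_zero, Matrix.mul_one, endMat_transpose_mul_endMat]

lemma nbWalkMat_add_two (k : ℕ) : nbWalkMat G (k + 2) =
    G.adjMatrix ℝ * nbWalkMat G (k + 1) - (G.degMatrix ℝ - 1) * nbWalkMat G k := by
  rw [nbWalkMat_succ G (k + 1), endMat_transpose_mul_pow]

/-- A closed non-backtracking walk either does not backtrack at its root, or has a tail there;
removing the tail expresses the difference of the two counts through shorter walks. -/
lemma trace_nbMat_pow (k : ℕ) : (nbMat G ^ (k + 3)).trace =
    (nbWalkMat G (k + 2)).trace - ((G.degMatrix ℝ - 1) * nbWalkMat G k).trace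
      + (nbMat G ^ (k + 1)).trace := by
  have h1 : (nbMat G ^ (k + 3)).trace =
      (nbWalkMat G (k + 2)).trace - (nbMat G ^ (k + 2) * revMat G).trace := by
    have h : nbMat G ^ (k + 2) * nbMat G = nbMat G ^ (k + 2) * (endMat G * startMat G)
        - nbMat G ^ (k + 2) * revMat G := by
      rw [← Matrix.mul_sub, ← nbMat_eq]
    rw [pow_succ _ (k + 2), h, Matrix.trace_sub, ← Matrix.mul_assoc, Matrix.trace_mul_comm,
      ← Matrix.mul_assoc, nbWalkMat]
  have h2 : nbMat G * revMat G = endMat G * (endMat G)ᵀ - 1 := by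
    rw [nbMat_eq, Matrix.sub_mul, Matrix.mul_assoc, startMat_mul_revMat, revMat_mul_revMat]
  have h3 : (nbMat G ^ (k + 2) * revMat G).trace =
      ((G.degMatrix ℝ - 1) * nbWalkMat G k).trace - (nbMat G ^ (k + 1)).trace := by
    rw [pow_succ _ (k + 1), Matrix.mul_assoc, h2, Matrix.mul_sub, Matrix.trace_sub, Matrix.mul_one,
      ← Matrix.mul_assoc, Matrix.trace_mul_comm, ← Matrix.mul_assoc, endMat_transpose_mul_pow]
  rw [h1, h3]
  ring

end NonBacktracking

/-! ### Biregular relations -/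

section Biregular

variable {V : Type*} [Fintype V] [DecidableEq V] (A Q : Matrix V V ℝ) (s c : ℝ)

lemma mul_Q_mul_pow (hAQ : A * Q = s • A - Q * A) (k : ℕ) :
    A * (Q * A ^ k) = s • A ^ (k + 1) - Q * A ^ (k + 1) := by
  rw [← Matrix.mul_assoc, hAQ, Matrix.sub_mul, Matrix.smul_mul, Matrix.mul_assoc, ← pow_succ']

lemma Q_mul_Q_mul_pow (hQQ : Q * Q = s • Q - c • (1 : Matrix V V ℝ)) (k : ℕ) :
    Q * (Q * A ^ k) = s • (Q * A ^ k) - c • A ^ k := by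
  rw [← Matrix.mul_assoc, hQQ, Matrix.sub_mul, Matrix.smul_mul, Matrix.smul_mul, Matrix.one_mul]

/-- Solution of the recursion for the non-backtracking walk matrices `B k` of a biregular bipartite
graph, as combinations of `A ^ j` and `Q * A ^ j`. Here `Q` is the degree matrix minus one, with
eigenvalues of sum `s` and product `c`, and moving `A` across `Q` swaps the two eigenvalues. -/
lemma nb_closed_form (B : ℕ → Matrix V V ℝ) (hAQ : A * Q = s • A - Q * A)
    (hQQ : Q * Q = s • Q - c • (1 : Matrix V V ℝ)) (h0 : B 0 = A)
    (h1 : B 1 = A * A - (Q + 1)) (hB : ∀ k, B (k + 2) = A * B (k + 1) - Q * B k) :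
    B 3 = A ^ 4 - (s + 1) • A ^ 2 - Q * A ^ 2 + (s + 1) • (Q * A ^ 0) - c • A ^ 0 ∧
    B 5 = A ^ 6 - (2 * s + 1) • A ^ 4 + (s ^ 2 + s - 2 * c) • A ^ 2 - Q * A ^ 4
      + (2 * s + 1) • (Q * A ^ 2) - (s ^ 2 + s - c) • (Q * A ^ 0) + (c + s * c) • A ^ 0 ∧
    B 7 = A ^ 8 - (3 * s + 1) • A ^ 6 + (3 * s ^ 2 + 2 * s - 3 * c) • A ^ 4
      - (s ^ 3 + s ^ 2 - 4 * s * c - 2 * c) • A ^ 2 - Q * A ^ 6 + (3 * s + 1) • (Q * A ^ 4)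
      - (3 * s ^ 2 + 2 * s - 2 * c) • (Q * A ^ 2)
      + (s ^ 3 + s ^ 2 - 2 * s * c - c) • (Q * A ^ 0) - (s ^ 2 * c + s * c - c ^ 2) • A ^ 0 ∧
    B 9 = A ^ 10 - (4 * s + 1) • A ^ 8 + (6 * s ^ 2 + 3 * s - 4 * c) • A ^ 6
      - (4 * s ^ 3 + 3 * s ^ 2 - 9 * s * c - 3 * c) • A ^ 4
      + (s ^ 4 + s ^ 3 - 6 * s ^ 2 * c - 4 * s * c + 3 * c ^ 2) • A ^ 2
      - Q * A ^ 8 + (4 * s + 1) • (Q * A ^ 6) - (6 * s ^ 2 + 3 * s - 3 * c) • (Q * A ^ 4)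
      + (4 * s ^ 3 + 3 * s ^ 2 - 6 * s * c - 2 * c) • (Q * A ^ 2)
      - (s ^ 4 + s ^ 3 - 3 * s ^ 2 * c - 2 * s * c + c ^ 2) • (Q * A ^ 0)
      + (s ^ 3 * c + s ^ 2 * c - 2 * s * c ^ 2 - c ^ 2) • A ^ 0 := by
  have hA := mul_Q_mul_pow A Q s hAQ
  have hQ := Q_mul_Q_mul_pow A Q s c hQQ
  have hP : ∀ k, A * A ^ k = A ^ (k + 1) := fun k => (pow_succ' A k).symm
  have e0 : B 0 = A ^ 1 := by rw [h0, pow_one]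
  have e1 : B 1 = A ^ 2 - Q * A ^ 0 - A ^ 0 := by
    rw [h1, pow_zero, Matrix.mul_one, sq]
    abel
  have e2 : B 2 = A ^ 3 - (s + 1) • A ^ 1 := by
    rw [hB 0, e1, e0]
    simp only [Matrix.mul_sub, hA, hP, Nat.reduceAdd]
    module
  have e3 : B 3 = A ^ 4 - (s + 1) • A ^ 2 - Q * A ^ 2 + (s + 1) • (Q * A ^ 0) - c • A ^ 0 := by
    rw [hB 1, e2, e1]
    simp only [Matrix.mul_sub, Matrix.mul_add, Matrix.mul_smul, hA, hP, hQ, Nat.reduceAdd]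
    module
  have e4 : B 4 = A ^ 5 - (2 * s + 1) • A ^ 3 + (s ^ 2 + s - c) • A ^ 1 := by
    rw [hB 2, e3, e2]
    simp only [Matrix.mul_sub, Matrix.mul_add, Matrix.mul_smul, hA, hP, hQ, Nat.reduceAdd]
    module
  have e5 : B 5 = A ^ 6 - (2 * s + 1) • A ^ 4 + (s ^ 2 + s - 2 * c) • A ^ 2 - Q * A ^ 4
      + (2 * s + 1) • (Q * A ^ 2) - (s ^ 2 + s - c) • (Q * A ^ 0) + (c + s * c) • A ^ 0 := by
    rw [hB 3, e4, e3]
    simp only [Matrix.mul_sub, Matrix.mul_add, Matrix.mul_smul, hA, hP, hQ, Nat.reduceAdd]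
    module
  have e6 : B 6 = A ^ 7 - (3 * s + 1) • A ^ 5 + (3 * s ^ 2 + 2 * s - 2 * c) • A ^ 3
      - (s ^ 3 + s ^ 2 - 2 * s * c - c) • A ^ 1 := by
    rw [hB 4, e5, e4]
    simp only [Matrix.mul_sub, Matrix.mul_add, Matrix.mul_smul, hA, hP, hQ, Nat.reduceAdd]
    module
  have e7 : B 7 = A ^ 8 - (3 * s + 1) • A ^ 6 + (3 * s ^ 2 + 2 * s - 3 * c) • A ^ 4
      - (s ^ 3 + s ^ 2 - 4 * s * c - 2 * c) • A ^ 2 - Q * A ^ 6 + (3 * s + 1) • (Q * A ^ 4)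
      - (3 * s ^ 2 + 2 * s - 2 * c) • (Q * A ^ 2)
      + (s ^ 3 + s ^ 2 - 2 * s * c - c) • (Q * A ^ 0) - (s ^ 2 * c + s * c - c ^ 2) • A ^ 0 := by
    rw [hB 5, e6, e5]
    simp only [Matrix.mul_sub, Matrix.mul_add, Matrix.mul_smul, hA, hP, hQ, Nat.reduceAdd]
    module
  have e8 : B 8 = A ^ 9 - (4 * s + 1) • A ^ 7 + (6 * s ^ 2 + 3 * s - 3 * c) • A ^ 5
      - (4 * s ^ 3 + 3 * s ^ 2 - 6 * s * c - 2 * c) • A ^ 3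
      + (s ^ 4 + s ^ 3 - 3 * s ^ 2 * c - 2 * s * c + c ^ 2) • A ^ 1 := by
    rw [hB 6, e7, e6]
    simp only [Matrix.mul_sub, Matrix.mul_add, Matrix.mul_smul, hA, hP, hQ, Nat.reduceAdd]
    module
  refine ⟨e3, e5, e7, ?_⟩
  rw [hB 7, e8, e7]
  simp only [Matrix.mul_sub, Matrix.mul_add, Matrix.mul_smul, hA, hP, hQ, Nat.reduceAdd]
  module

end Biregular

/-! ### The Tanner graph of a biregular 0/1 matrix -/

section Tanner

variable {m n : ℕ} (H : Matrix (Fin m) (Fin n) ℝ)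

lemma sum_eq_card {ι : Type*} [Fintype ι] (f : ι → ℝ) (hf : ∀ i, f i = 0 ∨ f i = 1) :
    ∑ i, f i = (Nat.card {i // f i = 1} : ℝ) := by
  classical
  rw [Nat.card_eq_fintype_card, Fintype.card_subtype, ← Finset.sum_boole]
  refine Finset.sum_congr rfl fun i _ => ?_
  rcases hf i with h | h <;> simp [h]

lemma adjMatrix_tannerGraph [DecidableRel (tannerGraph H).Adj]
    (hent : ∀ i j, H i j = 0 ∨ H i j = 1) :
    (tannerGraph H).adjMatrix ℝ = Matrix.fromBlocks 0 H Hᵀ 0 := by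
  ext u v
  rw [SimpleGraph.adjMatrix_apply]
  rcases u with i | j <;> rcases v with i' | j'
  · simp [tannerGraph]
  · rcases hent i j' with h | h <;> simp [tannerGraph, h]
  · rcases hent i' j with h | h <;> simp [tannerGraph, h]
  · simp [tannerGraph]

lemma degMatrix_tannerGraph [DecidableRel (tannerGraph H).Adj] (q1 q2 : ℕ)
    (hent : ∀ i j, H i j = 0 ∨ H i j = 1)
    (hcol : ∀ j, Nat.card {i : Fin m // H i j = 1} = q1 + 1)
    (hrow : ∀ i, Nat.card {j : Fin n // H i j = 1} = q2 + 1) :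
    (tannerGraph H).degMatrix ℝ =
      Matrix.fromBlocks (((q2 : ℝ) + 1) • 1) 0 0 (((q1 : ℝ) + 1) • 1) := by
  have hdeg : ∀ v, ((tannerGraph H).degree v : ℝ) =
      Sum.elim (fun _ => (q2 : ℝ) + 1) (fun _ => (q1 : ℝ) + 1) v := by
    intro v
    have h := SimpleGraph.adjMatrix_mulVec_const_apply (G := tannerGraph H) (a := (1 : ℝ)) (v := v)
    rw [mul_one, adjMatrix_tannerGraph H hent] at h
    rw [← h]
    rcases v with i | j
    · simp only [Matrix.mulVec, dotProduct, Fintype.sum_sum_type, Function.const_apply, mul_one,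
        Matrix.fromBlocks_apply₁₁, Matrix.fromBlocks_apply₁₂, Matrix.zero_apply,
        Finset.sum_const_zero, zero_add, Sum.elim_inl]
      rw [sum_eq_card _ (hent i), hrow]
      push_cast
      rfl
    · simp only [Matrix.mulVec, dotProduct, Fintype.sum_sum_type, Function.const_apply, mul_one,
        Matrix.fromBlocks_apply₂₁, Matrix.fromBlocks_apply₂₂, Matrix.zero_apply,
        Finset.sum_const_zero, add_zero, Sum.elim_inr, Matrix.transpose_apply]
      rw [sum_eq_card (fun i => H i j) (fun i => hent i j), hcol]
      push_cast
      rfl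
  rw [SimpleGraph.degMatrix]
  simp only [hdeg]
  ext u v
  rcases u with i | j <;> rcases v with i' | j' <;> simp [Matrix.diagonal_apply, Matrix.one_apply]

lemma trace_transpose_mul_pow (k : ℕ) :
    ((Hᵀ * H) ^ (k + 1)).trace = ((H * Hᵀ) ^ (k + 1)).trace := by
  have h : ∀ k : ℕ, (Hᵀ * H) ^ (k + 1) = Hᵀ * (H * Hᵀ) ^ k * H := by
    intro k
    induction k with
    | zero => simp
    | succ k ih =>
      rw [pow_succ _ (k + 1), ih, pow_succ (H * Hᵀ) k]
      simp only [Matrix.mul_assoc]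
  rw [h, Matrix.mul_assoc, Matrix.trace_mul_comm, pow_succ]
  simp only [Matrix.mul_assoc]

lemma fromBlocks_pow_even (k : ℕ) :
    (Matrix.fromBlocks 0 H Hᵀ 0) ^ (2 * k) =
      Matrix.fromBlocks ((H * Hᵀ) ^ k) 0 0 ((Hᵀ * H) ^ k) := by
  rw [pow_mul, sq, Matrix.fromBlocks_multiply]
  simp only [Matrix.zero_mul, Matrix.mul_zero, zero_add, add_zero]
  exact Matrix.fromBlocks_diagonal_pow _ _ _

lemma fromBlocks_sub' {k l : Type*} (A A' : Matrix k k ℝ) (B B' : Matrix k l ℝ)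
    (C C' : Matrix l k ℝ) (D D' : Matrix l l ℝ) :
    Matrix.fromBlocks A B C D - Matrix.fromBlocks A' B' C' D' =
      Matrix.fromBlocks (A - A') (B - B') (C - C') (D - D') := by
  ext (i | i) (j | j) <;> rfl

lemma trace_fromBlocks' {k l : Type*} [Fintype k] [Fintype l] (A : Matrix k k ℝ)
    (B : Matrix k l ℝ) (C : Matrix l k ℝ) (D : Matrix l l ℝ) :
    (Matrix.fromBlocks A B C D).trace = A.trace + D.trace := by
  simp [Matrix.trace, Fintype.sum_sum_type]

lemma trace_gram (q1 q2 : ℕ) (hent : ∀ i j, H i j = 0 ∨ H i j = 1)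
    (hcol : ∀ j, Nat.card {i : Fin m // H i j = 1} = q1 + 1)
    (hrow : ∀ i, Nat.card {j : Fin n // H i j = 1} = q2 + 1) :
    (H * Hᵀ).trace = m * ((q2 : ℝ) + 1) ∧ (H * Hᵀ).trace = n * ((q1 : ℝ) + 1) := by
  have hsq : ∀ i j, H i j * H i j = H i j := by
    intro i j
    rcases hent i j with h | h <;> simp [h]
  have h0 : (H * Hᵀ).trace = ∑ i, ∑ j, H i j := by
    simp [Matrix.trace, Matrix.mul_apply, hsq]
  constructor
  · rw [h0]
    simp only [sum_eq_card _ (hent _), hrow]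
    simp [mul_add]
  · have h1 : ∑ i, ∑ j, H i j = ∑ j, ∑ i, H i j := Finset.sum_comm
    rw [h0, h1]
    simp only [sum_eq_card (fun i => H i _) (fun i => hent i _), hcol]
    simp [mul_add]

lemma trace_nbMat_pow_eq_cycleCount {V : Type*} [Fintype V] [DecidableEq V] (G : SimpleGraph V)
    [DecidableRel G.Adj] (g L : ℕ) (hg : (g : ℕ∞) ≤ G.egirth) (hL : 0 < L) (hLg : L < 2 * g) :
    (nbMat G ^ L).trace = cycleCount G L := by
  rw [nbMat, trace_pow_eq_card _ _ hL, Nat.card_congr (nbSeqEquiv G L), card_nbSeq g L hg hL hLg]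

end Tanner

/-- Corollary 4(2), second formula: the number of 10-cycles `N_10` in terms of
`N_8`, `N_6` and `T_5 = trace((H Hᵀ)⁵)`. -/
theorem ten_cycles
    (q1 q2 m n : ℕ) (hq1 : 1 ≤ q1) (hq12 : q1 ≤ q2) (hq2 : 2 ≤ q2)
    (hm : 0 < m) (hn : 0 < n)
    (H : Matrix (Fin m) (Fin n) ℝ)
    (hent : ∀ i j, H i j = 0 ∨ H i j = 1)
    (hcol : ∀ j, Nat.card {i : Fin m // H i j = 1} = q1 + 1)
    (hrow : ∀ i, Nat.card {j : Fin n // H i j = 1} = q2 + 1)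
    (hconn : (tannerGraph H).Connected)
    (hg : (6 : ℕ∞) ≤ (tannerGraph H).egirth) :
    let s : ℝ := (q1 : ℝ) + q2
    let c : ℝ := (q1 : ℝ) * q2
    let A4 : ℝ := (q1 : ℝ) + q2 + 1
    let A6 : ℝ := ((q1 : ℝ) + q2 + 1) ^ 2 + c
    let A8 : ℝ := ((q1 : ℝ) + q2 + 1) ^ 3 + c * (3 * q1 + 3 * q2 + 2)
    let A10 : ℝ := -1 + ((q1 : ℝ) ^ 4 - (q1 : ℝ) ^ 3 + (q1 : ℝ) ^ 2 - q1 + 1)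
        + ((q2 : ℝ) ^ 4 - (q2 : ℝ) ^ 3 + (q2 : ℝ) ^ 2 - q2 + 1)
        - 5 * (∑ j ∈ Finset.range 5, (q1 : ℝ) ^ j * (q2 : ℝ) ^ (4 - j))
        + 5 * s * A8 - (10 * s ^ 2 - 5 * c) * A6 + (10 * s ^ 3 - 15 * c * s) * A4
    let A12 : ℝ := -1 - ((q1 : ℝ) ^ 5 - (q1 : ℝ) ^ 4 + (q1 : ℝ) ^ 3 - (q1 : ℝ) ^ 2 + q1 - 1)
        - ((q2 : ℝ) ^ 5 - (q2 : ℝ) ^ 4 + (q2 : ℝ) ^ 3 - (q2 : ℝ) ^ 2 + q2 - 1)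
        + 6 * (∑ j ∈ Finset.range 6, (q1 : ℝ) ^ j * (q2 : ℝ) ^ (5 - j))
        + 6 * s * A10 - (15 * s ^ 2 - 6 * c) * A8 + (20 * s ^ 3 - 24 * c * s) * A6
        - (15 * s ^ 4 - 36 * c * s ^ 2 + 9 * c ^ 2) * A4
    let A14 : ℝ := -1 + ((q1 : ℝ) ^ 6 - (q1 : ℝ) ^ 5 + (q1 : ℝ) ^ 4 - (q1 : ℝ) ^ 3 + (q1 : ℝ) ^ 2 - q1 + 1)
        + ((q2 : ℝ) ^ 6 - (q2 : ℝ) ^ 5 + (q2 : ℝ) ^ 4 - (q2 : ℝ) ^ 3 + (q2 : ℝ) ^ 2 - q2 + 1)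
        - 7 * (∑ j ∈ Finset.range 7, (q1 : ℝ) ^ j * (q2 : ℝ) ^ (6 - j))
        + 7 * s * A12 - (21 * s ^ 2 - 7 * c) * A10 + (35 * s ^ 3 - 35 * c * s) * A8
        - (35 * s ^ 4 - 70 * c * s ^ 2 + 14 * c ^ 2) * A6
        + (21 * s ^ 5 - 70 * c * s ^ 3 + 42 * c ^ 2 * s) * A4
    numCycles (tannerGraph H) 5 =
      -4 * s * numCycles (tannerGraph H) 4
      - 3 * (2 * s ^ 2 + c) * numCycles (tannerGraph H) 3
      + (Matrix.trace ((H * H.transpose) ^ 5) - ((n * (q1 + 1) : ℕ) : ℝ) * A10) / 10 := by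
  intro s c A4 A6 A8 A10 A12 A14
  classical
  clear A12 A14
  set G := tannerGraph H with hG
  have hg' : ((6 : ℕ) : ℕ∞) ≤ G.egirth := by exact_mod_cast hg
  set A := G.adjMatrix ℝ with hA
  set Q := G.degMatrix ℝ - 1 with hQ
  have hAb : A = Matrix.fromBlocks 0 H Hᵀ 0 := adjMatrix_tannerGraph H hent
  have hQb : Q = Matrix.fromBlocks ((q2 : ℝ) • 1) 0 0 ((q1 : ℝ) • 1) := by
    rw [hQ, degMatrix_tannerGraph H q1 q2 hent hcol hrow, ← Matrix.fromBlocks_one,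
      fromBlocks_sub']
    congr 1 <;> module
  have hAQ : A * Q = s • A - Q * A := by
    rw [hAb, hQb, Matrix.fromBlocks_multiply, Matrix.fromBlocks_multiply, Matrix.fromBlocks_smul,
      fromBlocks_sub']
    simp only [s]
    congr 1 <;> simp <;> module
  have hQQ : Q * Q = s • Q - c • (1 : Matrix (Fin m ⊕ Fin n) (Fin m ⊕ Fin n) ℝ) := by
    rw [hQb, ← Matrix.fromBlocks_one, Matrix.fromBlocks_multiply, Matrix.fromBlocks_smul,
      Matrix.fromBlocks_smul, fromBlocks_sub']
    simp only [s, c]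
    congr 1 <;> simp <;> module
  obtain ⟨b3, b5, b7, b9⟩ := nb_closed_form A Q s c (nbWalkMat G) hAQ hQQ (nbWalkMat_zero G)
    (by rw [nbWalkMat_one, hQ, sub_add_cancel]) (nbWalkMat_add_two G)
  have hAk : ∀ k : ℕ, (A ^ (2 * (k + 1))).trace = 2 * ((H * Hᵀ) ^ (k + 1)).trace := by
    intro k
    rw [hAb, fromBlocks_pow_even, trace_fromBlocks', trace_transpose_mul_pow]
    ring
  have hQAk : ∀ k : ℕ, (Q * A ^ (2 * (k + 1))).trace = s * ((H * Hᵀ) ^ (k + 1)).trace := by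
    intro k
    rw [hAb, hQb, fromBlocks_pow_even, Matrix.fromBlocks_multiply, trace_fromBlocks']
    simp only [Matrix.mul_zero, add_zero, zero_add, Matrix.smul_mul,
      Matrix.one_mul, Matrix.trace_smul, trace_transpose_mul_pow, smul_eq_mul, s]
    ring
  have hA0 : (A ^ 0).trace = (m : ℝ) + n := by simp
  have hQA0 : (Q * A ^ 0).trace = q2 * (m : ℝ) + q1 * n := by
    rw [hQb, pow_zero, Matrix.mul_one, trace_fromBlocks']
    simp
  have hQ' := Q_mul_Q_mul_pow A Q s c hQQ
  have a1 := hAk 0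
  have a2 := hAk 1
  have a3 := hAk 2
  have a4 := hAk 3
  have a5 := hAk 4
  have c1 := hQAk 0
  have c2 := hQAk 1
  have c3 := hQAk 2
  have c4 := hQAk 3
  simp only [zero_add, Nat.reduceAdd, Nat.reduceMul, mul_one] at a1 a2 a3 a4 a5 c1 c2 c3 c4
  have t2 := trace_nbMat_pow_eq_cycleCount G 6 2 hg' (by norm_num) (by norm_num)
  have t4 := trace_nbMat_pow_eq_cycleCount G 6 4 hg' (by norm_num) (by norm_num)
  have t6 := trace_nbMat_pow_eq_cycleCount G 6 6 hg' (by norm_num) (by norm_num)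
  have t8 := trace_nbMat_pow_eq_cycleCount G 6 8 hg' (by norm_num) (by norm_num)
  have t10 := trace_nbMat_pow_eq_cycleCount G 6 10 hg' (by norm_num) (by norm_num)
  rw [cycleCount_eq_zero 6 2 hg' (by norm_num)] at t2
  rw [cycleCount_eq_zero 6 4 hg' (by norm_num)] at t4
  have r4 := trace_nbMat_pow G 1
  have r6 := trace_nbMat_pow G 3
  have r8 := trace_nbMat_pow G 5
  have r10 := trace_nbMat_pow G 7
  have b1 : nbWalkMat G 1 = A ^ 2 - Q * A ^ 0 - A ^ 0 := by
    rw [nbWalkMat_one, hQ, pow_zero, Matrix.mul_one, sq]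
    abel
  simp only [Nat.reduceAdd, t2, t4, t6, t8, t10, ← hQ, b1, b3, b5, b7, b9, Matrix.mul_sub,
    Matrix.mul_add, Matrix.mul_smul, hQ', Matrix.trace_sub, Matrix.trace_add, Matrix.trace_smul,
    smul_eq_mul, a1, a2, a3, a4, a5, c1, c2, c3, c4, hA0, hQA0] at r4 r6 r8 r10
  obtain ⟨hE1, hE2⟩ := trace_gram H q1 q2 hent hcol hrow
  rw [pow_one] at r4 r6 r8 r10
  simp only [numCycles, Nat.reduceMul]
  generalize ((H * Hᵀ) ^ 2).trace = T2 at *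
  generalize ((H * Hᵀ) ^ 3).trace = T3 at *
  generalize ((H * Hᵀ) ^ 4).trace = T4 at *
  generalize ((H * Hᵀ) ^ 5).trace = T5 at *
  generalize (H * Hᵀ).trace = T1 at *
  generalize (cycleCount G 10 : ℝ) = C10 at *
  generalize (cycleCount G 8 : ℝ) = C8 at *
  generalize (cycleCount G 6 : ℝ) = C6 at *
  -- The two counts of the edges make `m` and `n` proportional to `q1 + 1` and `q2 + 1`.
  obtain ⟨u, hmu, hnu⟩ : ∃ u : ℝ, (m : ℝ) = (q1 + 1) * u ∧ (n : ℝ) = (q2 + 1) * u := by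
    have hpos : (q1 : ℝ) + 1 ≠ 0 := by positivity
    refine ⟨m / (q1 + 1), by field_simp, ?_⟩
    field_simp
    linarith
  push_cast
  rw [hmu] at hE1 r4 r6 r8 r10
  rw [hnu] at r4 r6 r8 r10 ⊢
  subst hE1
  simp only [A10, A8, A6, A4, s, c, Finset.sum_range_succ, Finset.sum_range_zero] at *
  norm_num
  -- The coefficients of `r8` and `r6` are those of `N_8` and `N_6`, adjusted for the occurrence of
  -- each cycle count in the next relation; the coefficient of `r4` eliminates `T2`.
  linear_combination (1 / 20) * r10 + (1 / 20 + (q1 + q2) / 4) * r8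
    + (1 / 20 + (q1 + q2) / 4 + (2 * (q1 + q2) ^ 2 + q1 * q2) / 4) * r6
    + (1 / 20 + (q1 + q2) / 4 + (2 * (q1 + q2) ^ 2 + q1 * q2) / 4 + (q1 + q2) ^ 3 / 2
      + (q1 + q2) * (q1 * q2)) * r4
end

section
/- Under the Tanner graph setup, if the girth g of G satisfies g ≥ 8, then the number of 12-cycles satisfies N_12 = −5(q1+q2)·N_10 − 2·(5(q1+q2)² + 2·q1·q2)·N_8 + (T_6 − |E|·A_12)/12, with A_12 as defined in the context. -/
/-!
Let `S` and `R` be the check-edge and variable-edge incidence matrices of the Tanner graph, and let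
`P = Sᵀ S`, `Q = Rᵀ R` be their Gram matrices, indexed by the edges. Regularity gives
`P² = (q2 + 1) P` and `Q² = (q1 + 1) Q`, and `S Rᵀ = H` gives
`trace ((P Q) ^ j) = trace ((H Hᵀ) ^ j)` for `j ≥ 1` (`trace_gram_pow`).

*Cycles as traces.* With the darts split according to their direction, the nonbacktracking matrix
of the graph has the off-diagonal blocks `P - 1` and `Q - 1` (`dartMatrix_eq`). Hence
`2 * trace (M ^ k)`, where `M = (P - 1) (Q - 1)`, is the number of rooted cyclic nonbacktracking
walks of length `2 k`. In a graph of girth at least 8, such a walk of length less than 16 is a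
cycle: otherwise it repeats a vertex, a shortest repetition has length less than 8, and it would
itself trace a cycle (`injOn_of_nonbacktracking`). Therefore `trace (M ^ k) = 2 k N_{2k}` for
`2 ≤ k ≤ 7`, which vanishes for `k = 2, 3` (`two_mul_trace_eq_cycleCount`).

*Passing from `M` to `P Q`.* Write `s = q1 + q2` and `c = q1 q2`. The element
`Z = P Q + Q P - (q1 + 1) P - (q2 + 1) Q + 1 + c` commutes with `P` and `Q`, satisfies
`Z P Q = (P Q)² - s P Q`, and `M² = Z M - c`. These relations turn every `trace (M ^ k)` into a
linear combination of the `trace ((P Q) ^ j)` with `j ≤ k`, and solving the system for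
`trace ((P Q) ^ 6)` gives the formula (`hecke_trace`). That its constant term is `A_12` is a
polynomial identity.
-/

open Matrix Finset

/-! ### Cycles and periodic nonbacktracking sequences -/

/-- The walk `f 0, f 1, …, f n` along a sequence of successively adjacent vertices. -/
def walkAlong {V : Type*} {G : SimpleGraph V} (f : ℕ → V) (h : ∀ i, G.Adj (f i) (f (i + 1))) :
    (n : ℕ) → G.Walk (f 0) (f n)
  | 0 => SimpleGraph.Walk.nil
  | n + 1 => SimpleGraph.Walk.cons (h 0) (walkAlong (fun i => f (i + 1)) (fun i => h (i + 1)) n)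

section Walks

variable {V : Type*} {G : SimpleGraph V}

lemma length_walkAlong (f : ℕ → V) (h : ∀ i, G.Adj (f i) (f (i + 1))) (n : ℕ) :
    (walkAlong f h n).length = n := by
  induction n generalizing f with
  | zero => rfl
  | succ n ih => simp [walkAlong, ih]

lemma support_walkAlong (f : ℕ → V) (h : ∀ i, G.Adj (f i) (f (i + 1))) (n : ℕ) :
    (walkAlong f h n).support = (List.range (n + 1)).map f := by
  induction n generalizing f with
  | zero => rfl
  | succ n ih =>
    rw [List.range_succ_eq_map]
    simp [walkAlong, ih, Function.comp_def]

lemma edges_walkAlong (f : ℕ → V) (h : ∀ i, G.Adj (f i) (f (i + 1))) (n : ℕ) :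
    (walkAlong f h n).edges = (List.range n).map (fun i => s(f i, f (i + 1))) := by
  induction n generalizing f with
  | zero => rfl
  | succ n ih =>
    rw [List.range_succ_eq_map]
    simp [walkAlong, ih, Function.comp_def]

lemma getVert_walkAlong (f : ℕ → V) (h : ∀ i, G.Adj (f i) (f (i + 1))) (n i : ℕ) (hi : i ≤ n) :
    (walkAlong f h n).getVert i = f i := by
  induction n generalizing f i with
  | zero => obtain rfl : i = 0 := by omega
            rfl
  | succ n ih =>
    cases i with
    | zero => rfl
    | succ i => simpa [walkAlong] using ih (fun i => f (i + 1)) _ i (by omega)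

/-- A sequence returning to its start after `l ≥ 3` steps, without repetition before that,
traces a cycle. -/
lemma isCycle_walkAlong (f : ℕ → V) (h : ∀ i, G.Adj (f i) (f (i + 1))) (l : ℕ) (hl : 3 ≤ l)
    (hf : f l = f 0) (hinj : ∀ i j, i < l → j < l → f i = f j → i = j) :
    ((walkAlong f h l).copy rfl hf).IsCycle := by
  have hinj' : ∀ i j, i ≤ l → j ≤ l → f i = f j → i = j ∨ (i = 0 ∧ j = l) ∨ (i = l ∧ j = 0) := by
    intro i j hi hj hij
    rcases Nat.lt_or_ge i l with hi' | hi' <;> rcases Nat.lt_or_ge j l with hj' | hj'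
    · exact .inl (hinj i j hi' hj' hij)
    · obtain rfl : j = l := by omega
      rw [hf] at hij
      have := hinj i 0 hi' (by omega) hij
      omega
    · obtain rfl : i = l := by omega
      rw [hf] at hij
      have := hinj 0 j (by omega) hj' hij
      omega
    · omega
  rw [SimpleGraph.Walk.isCycle_def, SimpleGraph.Walk.isTrail_def]
  refine ⟨?_, ?_, ?_⟩
  · rw [SimpleGraph.Walk.edges_copy, edges_walkAlong]
    refine List.Nodup.map_on ?_ List.nodup_range
    intro i hi j hj hij
    rw [List.mem_range] at hi hj
    rcases Sym2.eq_iff.mp hij with ⟨h1, -⟩ | ⟨h1, h2⟩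
    · exact hinj i j hi hj h1
    · have := hinj' _ _ (by omega) (by omega) h1
      have := hinj' _ _ (by omega) (by omega) h2
      omega
  · intro hnil
    have := congrArg SimpleGraph.Walk.length hnil
    rw [SimpleGraph.Walk.length_copy, length_walkAlong] at this
    simp at this
    omega
  · rw [SimpleGraph.Walk.support_copy, support_walkAlong, List.range_succ_eq_map]
    simp only [List.map_cons, List.tail_cons, List.map_map]
    refine List.Nodup.map_on ?_ List.nodup_range
    intro i hi j hj hij
    rw [List.mem_range] at hi hj
    have := hinj' _ _ (by omega) (by omega) hij
    omega

/-- Closed walks of length `l` that are cycles correspond to `l`-periodic sequences of successively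
adjacent vertices that are injective on a period. -/
lemma cycleCount_eq_card (G : SimpleGraph V) (l : ℕ) (hl : 3 ≤ l) :
    cycleCount G l = Nat.card {f : ℕ → V // (∀ i, f (i + l) = f i) ∧
      (∀ i, G.Adj (f i) (f (i + 1))) ∧ ∀ i j, i < l → j < l → f i = f j → i = j} := by
  have key : ∀ p : {p : Σ v : V, G.Walk v v // p.2.length = l ∧ p.2.IsCycle},
      (∀ i, (fun i => p.1.2.getVert (i % l)) (i + l) = (fun i => p.1.2.getVert (i % l)) i) ∧
      (∀ i, G.Adj ((fun i => p.1.2.getVert (i % l)) i) ((fun i => p.1.2.getVert (i % l)) (i + 1))) ∧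
      ∀ i j, i < l → j < l → (fun i => p.1.2.getVert (i % l)) i =
        (fun i => p.1.2.getVert (i % l)) j → i = j := by
    rintro ⟨⟨a, w⟩, hw, hc⟩
    dsimp only at hw hc ⊢
    refine ⟨fun i => by simp, fun i => ?_, fun i j hi hj hij => ?_⟩
    · have hlt : i % l < l := Nat.mod_lt _ (by omega)
      have hadj := w.adj_getVert_succ (i := i % l) (by omega)
      rcases Nat.lt_or_ge (i % l + 1) l with h | h
      · rwa [← Nat.mod_add_mod i l 1, Nat.mod_eq_of_lt h]
      · have h' : i % l + 1 = l := by omega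
        rw [← Nat.mod_add_mod i l 1, h', Nat.mod_self, w.getVert_zero]
        rw [h'] at hadj
        rwa [← hw, w.getVert_length, hw] at hadj
    · rw [Nat.mod_eq_of_lt hi, Nat.mod_eq_of_lt hj] at hij
      exact hc.getVert_injOn' (by simp; omega) (by simp; omega) hij
  refine Nat.card_eq_of_bijective (fun p => ⟨fun i => p.1.2.getVert (i % l), key p⟩) ⟨?_, ?_⟩
  · rintro ⟨⟨a, w⟩, hw, hc⟩ ⟨⟨a', w'⟩, hw', hc'⟩ h
    have h1 : ∀ i, w.getVert (i % l) = w'.getVert (i % l) := by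
      intro i
      exact congrFun (congrArg Subtype.val h) i
    dsimp only at hw hw'
    obtain rfl : a = a' := by simpa using h1 0
    have : w = w' := by
      refine SimpleGraph.Walk.ext_getVert_le_length (by omega) fun k hk => ?_
      rcases Nat.lt_or_ge k l with hkl | hkl
      · simpa [Nat.mod_eq_of_lt hkl] using h1 k
      · rw [w.getVert_of_length_le (by omega), w'.getVert_of_length_le (by omega)]
    subst this
    rfl
  · rintro ⟨f, hper, hadj, hinj⟩
    have hf : f l = f 0 := by simpa using hper 0
    refine ⟨⟨⟨f 0, (walkAlong f hadj l).copy rfl hf⟩, ?_, isCycle_walkAlong f hadj l hl hf hinj⟩, ?_⟩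
    · simp [length_walkAlong]
    · apply Subtype.ext
      funext i
      have hlt : i % l < l := Nat.mod_lt _ (by omega)
      simp only [SimpleGraph.Walk.getVert_copy]
      rw [getVert_walkAlong _ _ _ _ hlt.le]
      exact Function.Periodic.map_mod_nat hper i

/-- If the girth exceeds `l / 2`, a cyclic sequence of length `l` without backtracking is
injective on a period: a shortest repetition has length at most `l / 2` and would trace a cycle. -/
lemma injOn_of_nonbacktracking (g l : ℕ) (hg : (g : ℕ∞) ≤ G.egirth) (hl : l < 2 * g)
    (f : ℕ → V) (hper : ∀ i, f (i + l) = f i) (hadj : ∀ i, G.Adj (f i) (f (i + 1)))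
    (hnb : ∀ i, f i ≠ f (i + 2)) :
    ∀ i j, i < l → j < l → f i = f j → i = j := by
  classical
  by_contra! hcon
  have hex : ∃ a, 0 < a ∧ a ≤ l / 2 ∧ ∃ i, f (i + a) = f i := by
    obtain ⟨i, j, hi, hj, hij, hne⟩ := hcon
    wlog hlt : i < j generalizing i j
    · exact this j i hj hi hij.symm hne.symm (by omega)
    rcases Nat.lt_or_ge (l / 2) (j - i) with h | h
    · refine ⟨l - (j - i), by omega, by omega, j, ?_⟩
      rw [show j + (l - (j - i)) = i + l by omega, hper, hij]
    · exact ⟨j - i, by omega, h, i, by rw [show i + (j - i) = j by omega, hij]⟩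
  obtain ⟨ha0, hal, i, hi⟩ := Nat.find_spec hex
  have hmin := fun b (hb : b < Nat.find hex) => Nat.find_min hex hb
  generalize Nat.find hex = a at ha0 hal hi hmin
  have ha1 : a ≠ 1 := by
    rintro rfl
    exact (hadj i).ne hi.symm
  have ha2 : a ≠ 2 := by
    rintro rfl
    exact hnb i hi.symm
  have hc := isCycle_walkAlong (fun k => f (i + k)) (fun k => hadj (i + k)) a (by omega) hi (by
    intro x y hx hy hxy
    by_contra hne
    rcases Nat.lt_or_gt_of_ne hne with h | h
    · exact hmin (y - x) (by omega) ⟨by omega, by omega, i + x, by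
        rw [show i + x + (y - x) = i + y by omega]; exact hxy.symm⟩
    · exact hmin (x - y) (by omega) ⟨by omega, by omega, i + y, by
        rw [show i + y + (x - y) = i + x by omega]; exact hxy⟩)
  have hle := hg.trans (SimpleGraph.egirth_le_length hc)
  rw [SimpleGraph.Walk.length_copy, length_walkAlong] at hle
  have : g ≤ a := by exact_mod_cast hle
  omega

/-- The nonbacktracking condition is local, so the right-hand side can be computed as a trace. -/
lemma cycleCount_eq_card_nonbacktracking (g l : ℕ) (hg : (g : ℕ∞) ≤ G.egirth) (hl : l < 2 * g)
    (hl3 : 3 ≤ l) :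
    cycleCount G l = Nat.card {f : ℕ → V // (∀ i, f (i + l) = f i) ∧
      (∀ i, G.Adj (f i) (f (i + 1))) ∧ ∀ i, f i ≠ f (i + 2)} := by
  rw [cycleCount_eq_card G l hl3]
  refine Nat.card_congr (Equiv.subtypeEquivRight fun f => ?_)
  refine and_congr_right fun hper => and_congr_right fun hadj => ⟨fun hinj i h => ?_,
    injOn_of_nonbacktracking g l hg hl f hper hadj⟩
  have hlt : i % l < l := Nat.mod_lt _ (by omega)
  have hlt2 : (i + 2) % l < l := Nat.mod_lt _ (by omega)
  rw [← Function.Periodic.map_mod_nat hper i, ← Function.Periodic.map_mod_nat hper (i + 2)] at h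
  have h2 := hinj _ _ hlt hlt2 h
  rw [← Nat.mod_add_mod i l 2] at h2
  clear hlt2 h
  generalize i % l = r at *
  rcases Nat.lt_or_ge (r + 2) l with h' | h'
  · rw [Nat.mod_eq_of_lt h'] at h2
    omega
  · rw [Nat.mod_eq_sub_mod h', Nat.mod_eq_of_lt (by omega)] at h2
    omega

lemma cycleCount_eq_zero_s8 (l : ℕ) (hl : (l : ℕ∞) < G.egirth) : cycleCount G l = 0 := by
  have : IsEmpty {p : Σ v : V, G.Walk v v // p.2.length = l ∧ p.2.IsCycle} := by
    refine ⟨fun p => ?_⟩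
    have := SimpleGraph.egirth_le_length p.2.2
    rw [p.2.1] at this
    exact absurd hl (not_lt.mpr this)
  exact Nat.card_of_isEmpty

end Walks

/-! ### Traces of powers of a relation matrix -/

section Trace

variable {D : Type*} [Fintype D] [DecidableEq D] (R : D → D → Prop) [DecidableRel R]

/-- Entries of powers of the `0`-`1` matrix of a relation count the chains between two points. -/
lemma pow_apply_eq_card (l : ℕ) (a b : D) :
    ((Matrix.of fun x y => if R x y then (1 : ℝ) else 0) ^ l) a b =
      ∑ f : Fin (l + 1) → D, if f 0 = a ∧ f (Fin.last l) = b ∧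
        ∀ i : Fin l, R (f i.castSucc) (f i.succ) then (1 : ℝ) else 0 := by
  induction l generalizing a with
  | zero =>
    rw [pow_zero, Matrix.one_apply, ← (Equiv.funUnique (Fin 1) D).symm.sum_comp]
    simp [ite_and, eq_comm]
  | succ l ih =>
    rw [pow_succ', Matrix.mul_apply, ← (Fin.consEquiv fun _ => D).sum_comp, Fintype.sum_prod_type]
    simp only [ih, Finset.mul_sum, Fin.consEquiv_apply, Fin.cons_zero, ← Fin.succ_last,
      Fin.cons_succ, Fin.forall_fin_succ (n := l), Fin.castSucc_zero, ← Fin.succ_castSucc]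
    rw [Finset.sum_comm, Finset.sum_comm (s := (Finset.univ : Finset D))]
    refine Finset.sum_congr rfl fun f _ => ?_
    simp only [ite_and, Matrix.of_apply, mul_ite, mul_one, mul_zero, Finset.sum_ite_eq,
      Finset.sum_ite_eq', Finset.mem_univ, if_true]
    by_cases h1 : R a (f 0) <;> by_cases h2 : f (Fin.last l) = b <;> simp [h1, h2]

/-- The trace of the `l`-th power of a `0`-`1` matrix counts the `l`-periodic sequences whose
successive terms are related. -/
lemma trace_pow_eq_card_s8 (l : ℕ) (hl : 0 < l) :
    Matrix.trace ((Matrix.of fun x y => if R x y then (1 : ℝ) else 0) ^ l) =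
      Nat.card {d : ℕ → D // (∀ i, d (i + l) = d i) ∧ ∀ i, R (d i) (d (i + 1))} := by
  have h1 : Matrix.trace ((Matrix.of fun x y => if R x y then (1 : ℝ) else 0) ^ l) =
      Nat.card {f : Fin (l + 1) → D // f (Fin.last l) = f 0 ∧
        ∀ i : Fin l, R (f i.castSucc) (f i.succ)} := by
    rw [Nat.card_eq_fintype_card, Fintype.card_subtype, Finset.card_filter]
    simp only [Matrix.trace, Matrix.diag_apply, pow_apply_eq_card]
    rw [Finset.sum_comm]
    push_cast
    refine Finset.sum_congr rfl fun f _ => ?_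
    simp [ite_and]
  rw [h1]
  congr 1
  symm
  refine Nat.card_eq_of_bijective (fun d => ⟨fun i => d.1 i, ?_, fun i => d.2.2 i⟩) ⟨?_, ?_⟩
  · have := d.2.1 0
    simpa using this
  · rintro ⟨d, hd, _⟩ ⟨d', hd', _⟩ h
    apply Subtype.ext
    funext i
    have hlt : i % l < l := Nat.mod_lt _ hl
    have := congrFun (congrArg Subtype.val h) (⟨i % l, by omega⟩ : Fin (l + 1))
    simp only at this
    rwa [Function.Periodic.map_mod_nat hd, Function.Periodic.map_mod_nat hd'] at this
  · rintro ⟨f, hf, hR⟩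
    refine ⟨⟨fun i => f ⟨i % l, (Nat.mod_lt _ hl).trans (Nat.lt_succ_self l)⟩, fun i => by simp,
      fun i => ?_⟩, ?_⟩
    · have hlt : i % l < l := Nat.mod_lt _ hl
      have hi := hR ⟨i % l, hlt⟩
      rcases Nat.lt_or_ge (i % l + 1) l with h | h
      · simp only [← Nat.mod_add_mod i l 1, Nat.mod_eq_of_lt h]
        exact hi
      · have h' : i % l + 1 = l := by omega
        simp only [← Nat.mod_add_mod i l 1, h', Nat.mod_self]
        have : (⟨i % l, hlt⟩ : Fin l).succ = Fin.last l := Fin.ext h'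
        rw [this, hf] at hi
        exact hi
    · apply Subtype.ext
      funext i
      rcases Nat.lt_or_ge i l with h | h
      · simp only [Nat.mod_eq_of_lt h]
      · obtain rfl : i = Fin.last l := Fin.ext (by simp; omega)
        simp only [Fin.val_last, Nat.mod_self, hf]
        rfl

end Trace

/-! ### Two scaled idempotents in a real algebra -/

section Algebra

variable {A : Type*} [Ring A] [Algebra ℝ A]

/-- Together with `hecke_central'` this shows that `Z = p q + q p - (a + 1) p - (b + 1) q + 1 + a b`
commutes with `p`; by symmetry it also commutes with `q`. -/
lemma hecke_central (a b : ℝ) (p q : A) (hp : p * p = (b + 1) • p) :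
    (p * q + q * p - (a + 1) • p - (b + 1) • q + (1 + a * b) • (1 : A)) * p =
      p * q * p - (a + b) • p := by
  simp only [add_mul, sub_mul, smul_mul_assoc, one_mul, mul_assoc, hp, mul_smul_comm]
  module

lemma hecke_central' (a b : ℝ) (p q : A) (hp : p * p = (b + 1) • p) :
    p * (p * q + q * p - (a + 1) • p - (b + 1) • q + (1 + a * b) • (1 : A)) =
      p * q * p - (a + b) • p := by
  simp only [mul_add, mul_sub, mul_smul_comm, mul_one, ← mul_assoc, hp, smul_mul_assoc]
  module

/-- With `M = (p - 1) (q - 1)` and the central element `Z` of `hecke_central`, this reads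
`M² = Z M - a b`. -/
lemma hecke_quadratic (a b : ℝ) (p q : A) (hp : p * p = (b + 1) • p) (hq : q * q = (a + 1) • q) :
    ((p - 1) * (q - 1)) * ((p - 1) * (q - 1)) =
      (p * q + q * p - (a + 1) • p - (b + 1) • q + (1 + a * b) • (1 : A)) * ((p - 1) * (q - 1))
        - (a * b) • (1 : A) := by
  have hp' : ∀ x, p * (p * x) = (b + 1) • (p * x) := fun x => by
    rw [← mul_assoc, hp, smul_mul_assoc]
  simp only [mul_sub, add_mul, sub_mul, smul_mul_assoc, mul_smul_comm, mul_one, one_mul,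
    mul_assoc, hp, hq, hp']
  module

/-- The trace of `(p q) ^ 6` in terms of the traces of `((p - 1) (q - 1)) ^ k`, `k ≤ 6`, for two
elements with `p² = (b + 1) p` and `q² = (a + 1) q`. The traces for `k = 2, 3` are assumed to
vanish, as they do when there are no cycles of length 4 or 6. -/
lemma hecke_trace (τ : A →ₗ[ℝ] ℝ) (hτ : ∀ x y, τ (x * y) = τ (y * x))
    (a b e : ℝ) (p q : A) (hp : p * p = (b + 1) • p) (hq : q * q = (a + 1) • q)
    (h1 : τ 1 = e) (hpe : τ p = e) (hqe : τ q = e) (hpq : τ (p * q) = e)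
    (N8 N10 N12 : ℝ)
    (hM2 : τ (((p - 1) * (q - 1)) ^ 2) = 0) (hM3 : τ (((p - 1) * (q - 1)) ^ 3) = 0)
    (hM4 : τ (((p - 1) * (q - 1)) ^ 4) = 8 * N8)
    (hM5 : τ (((p - 1) * (q - 1)) ^ 5) = 10 * N10)
    (hM6 : τ (((p - 1) * (q - 1)) ^ 6) = 12 * N12) :
    τ ((p * q) ^ 6) = 12 * N12 + 60 * (a + b) * N10 + (120 * (a + b) ^ 2 + 48 * (a * b)) * N8
      + e * ((a + b + 1) ^ 5 + a * b * (10 * (a + b) ^ 3 + 20 * (a + b) ^ 2 + 15 * (a + b) + 4)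
        + (a * b) ^ 2 * (10 * (a + b) + 5)) := by
  set Z : A := p * q + q * p - (a + 1) • p - (b + 1) • q + (1 + a * b) • (1 : A) with hZ
  set M : A := (p - 1) * (q - 1) with hM
  have hZp : Z * p = p * q * p - (a + b) • p := hecke_central a b p q hp
  have hpZ : p * Z = p * q * p - (a + b) • p := hecke_central' a b p q hp
  have hZq : Z * q = q * p * q - (a + b) • q := by
    rw [← add_comm b a, ← hecke_central b a q p hq, hZ]
    congr 1
    rw [mul_comm b a]
    abel
  have hcom : Commute Z p := hZp.trans hpZ.symm
  have hMM : M * M = Z * M - (a * b) • (1 : A) := hecke_quadratic a b p q hp hq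
  -- `x`, `y`, `y'`, `t` are introduced without their values, so that the recurrences below
  -- act as rewrite rules.
  obtain ⟨x, hx⟩ : ∃ x : ℕ → ℕ → ℝ, ∀ j i, x j i = τ (Z ^ j * (p * q) ^ (i + 1)) :=
    ⟨_, fun _ _ => rfl⟩
  obtain ⟨y, hy⟩ : ∃ y : ℕ → ℕ → ℝ, ∀ j i, y j i = τ (Z ^ j * ((p * q) ^ i * p)) :=
    ⟨_, fun _ _ => rfl⟩
  obtain ⟨y', hy'⟩ : ∃ y' : ℕ → ℕ → ℝ, ∀ j i, y' j i = τ (Z ^ j * (q * (p * q) ^ i)) :=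
    ⟨_, fun _ _ => rfl⟩
  obtain ⟨t, ht⟩ : ∃ t : ℕ → ℕ → ℝ, ∀ k j, t k j = τ (Z ^ j * M ^ k) :=
    ⟨_, fun _ _ => rfl⟩
  have hxS : ∀ j i, x (j + 1) i = x j (i + 1) - (a + b) * x j i := by
    intro j i
    have : Z * (p * q) ^ (i + 1) = (p * q) ^ (i + 1 + 1) - (a + b) • (p * q) ^ (i + 1) := by
      rw [pow_succ' (p * q) (i + 1), pow_succ' (p * q) i]
      simp only [← mul_assoc, hZp, sub_mul, smul_mul_assoc]
    rw [hx, hx, hx, pow_succ, mul_assoc, this, mul_sub, mul_smul_comm, map_sub, map_smul,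
      smul_eq_mul]
  have hyS : ∀ j i, y (j + 1) i = y j (i + 1) - (a + b) * y j i := by
    intro j i
    have : Z * ((p * q) ^ i * p) = (p * q) ^ (i + 1) * p - (a + b) • ((p * q) ^ i * p) := by
      have hc : (p * q) ^ i * p = p * (q * p) ^ i := by
        induction i with
        | zero => simp
        | succ i ih => rw [pow_succ', mul_assoc, ih, pow_succ']; simp only [mul_assoc]
      rw [pow_succ', mul_assoc (p * q), hc, ← mul_assoc, hZp, sub_mul, smul_mul_assoc]
      simp only [mul_assoc]
    rw [hy, hy, hy, pow_succ, mul_assoc, this, mul_sub, mul_smul_comm, map_sub, map_smul,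
      smul_eq_mul]
  have hyS' : ∀ j i, y' (j + 1) i = y' j (i + 1) - (a + b) * y' j i := by
    intro j i
    have : Z * (q * (p * q) ^ i) = q * (p * q) ^ (i + 1) - (a + b) • (q * (p * q) ^ i) := by
      rw [← mul_assoc, hZq, sub_mul, smul_mul_assoc, pow_succ']
      simp only [mul_assoc]
    rw [hy', hy', hy', pow_succ, mul_assoc, this, mul_sub, mul_smul_comm, map_sub, map_smul,
      smul_eq_mul]
  have hy0 : y 0 0 = e := by rw [hy]; simpa using hpe
  have hy0' : y' 0 0 = e := by rw [hy']; simpa using hqe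
  have hyT : ∀ i, y 0 (i + 1) = (b + 1) * x 0 i := by
    intro i
    rw [hy, hx, pow_zero, one_mul, one_mul, hτ, pow_succ', ← mul_assoc, ← mul_assoc, hp,
      smul_mul_assoc, smul_mul_assoc, map_smul, smul_eq_mul]
  have hyT' : ∀ i, y' 0 (i + 1) = (a + 1) * x 0 i := by
    intro i
    rw [hy', hx, pow_zero, one_mul, one_mul, hτ, pow_succ, mul_assoc, mul_assoc, hq,
      mul_smul_comm, mul_smul_comm, map_smul, smul_eq_mul]
  have ht00 : t 0 0 = e := by rw [ht]; simpa using h1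
  have ht0 : ∀ j, t 0 (j + 1) =
      2 * x j 0 - (a + 1) * y j 0 - (b + 1) * y' j 0 + (1 + a * b) * t 0 j := by
    intro j
    have hqp : τ (Z ^ j * (q * p)) = τ (Z ^ j * (p * q)) := by
      rw [← mul_assoc, hτ, ← mul_assoc, ← mul_assoc, ((hcom.pow_left j).eq)]
    rw [ht, ht, hx, hy, hy', pow_succ Z j]
    nth_rw 2 [hZ]
    simp only [mul_add, mul_sub, map_add, map_sub, mul_smul_comm, map_smul, smul_eq_mul, hqp,
      pow_zero, mul_one, one_mul, zero_add, pow_one]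
    ring
  have ht1 : ∀ j, t 1 j = x j 0 - y j 0 - y' j 0 + t 0 j := by
    intro j
    rw [ht, ht, hx, hy, hy', pow_one, hM]
    simp only [mul_sub, sub_mul, map_sub, pow_zero, mul_one, one_mul, zero_add, pow_one]
    ring
  have htS : ∀ k j, t (k + 2) j = t (k + 1) (j + 1) - a * b * t k j := by
    intro k j
    have : M ^ (k + 2) = Z * M ^ (k + 1) - (a * b) • M ^ k := by
      rw [pow_succ' M (k + 1), pow_succ' M k, ← mul_assoc, hMM, sub_mul, smul_mul_assoc, one_mul,
        mul_assoc]
    rw [ht, ht, ht, this, mul_sub, mul_smul_comm, map_sub, map_smul, smul_eq_mul, pow_succ Z j,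
      mul_assoc (Z ^ j)]
  have hx00 : x 0 0 = e := by rw [hx]; simpa using hpq
  have hk : ∀ k, τ (M ^ k) = t k 0 := fun k => by rw [ht, pow_zero, one_mul]
  rw [hk] at hM2 hM3 hM4 hM5 hM6
  -- The recurrences reduce each `t k 0` to a combination of the traces `x 0 i` of `(p q) ^ (i + 1)`.
  simp only [htS, ht1, ht0, ht00, hxS, hyS, hyS', hyT, hyT', hy0, hy0', hx00, zero_add,
    Nat.reduceAdd] at hM2 hM3 hM4 hM5 hM6
  have hgoal : τ ((p * q) ^ 6) = x 0 5 := by rw [hx, pow_zero, one_mul]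
  rw [hgoal]
  linear_combination hM6 + 6 * (a + b) * hM5 + (15 * (a + b) ^ 2 + 6 * (a * b)) * hM4
    + (20 * (a + b) ^ 3 + 30 * (a * b) * (a + b)) * hM3
    + (15 * (a + b) ^ 4 + 60 * (a * b) * (a + b) ^ 2 + 15 * (a * b) ^ 2) * hM2

end Algebra

/-! ### Incidence matrices and darts of the Tanner graph -/

section Tanner

variable {m n : ℕ} (H : Matrix (Fin m) (Fin n) ℝ)

/-- The edges of the Tanner graph, as (check, variable) pairs. -/
abbrev TannerEdge : Type := {e : Fin m × Fin n // H e.1 e.2 = 1}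

/-- The check-edge incidence matrix. -/
def checkInc : Matrix (Fin m) (TannerEdge H) ℝ :=
  Matrix.of fun i e => if e.1.1 = i then 1 else 0

/-- The variable-edge incidence matrix. -/
def varInc : Matrix (Fin n) (TannerEdge H) ℝ :=
  Matrix.of fun j e => if e.1.2 = j then 1 else 0

/-- An entry of the product counts the edges joining a given check to a given variable. -/
lemma checkInc_mul_varInc (hent : ∀ i j, H i j = 0 ∨ H i j = 1) :
    checkInc H * (varInc H)ᵀ = H := by
  ext i j
  rw [Matrix.mul_apply]
  simp only [checkInc, varInc, Matrix.transpose_apply, Matrix.of_apply, ← ite_and, mul_ite, mul_one,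
    mul_zero]
  rcases hent i j with h | h
  · rw [h]
    refine Finset.sum_eq_zero fun e _ => ?_
    rw [if_neg]
    rintro ⟨h1, h2⟩
    have := e.2
    rw [h1, h2, h] at this
    exact zero_ne_one this
  · rw [h, Finset.sum_eq_single ⟨(i, j), h⟩]
    · simp
    · rintro ⟨⟨i', j'⟩, he⟩ _ hne
      rw [if_neg]
      rintro ⟨h1, h2⟩
      exact hne (Subtype.ext (Prod.ext h2 h1))
    · simp

lemma checkInc_mul_transpose (q2 : ℕ) (hrow : ∀ i, Nat.card {j : Fin n // H i j = 1} = q2 + 1) :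
    checkInc H * (checkInc H)ᵀ = ((q2 : ℝ) + 1) • (1 : Matrix (Fin m) (Fin m) ℝ) := by
  ext i i'
  rw [Matrix.mul_apply, Matrix.smul_apply, Matrix.one_apply]
  simp only [checkInc, Matrix.transpose_apply, Matrix.of_apply, ← ite_and, mul_ite, mul_one,
    mul_zero]
  split_ifs with h
  · subst h
    have hc : Nat.card {e : TannerEdge H // e.1.1 = i} = q2 + 1 := by
      rw [← hrow i]
      refine Nat.card_congr ⟨fun e => ⟨e.1.1.2, by
          obtain ⟨⟨⟨a, b⟩, he⟩, hi⟩ := e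
          subst hi
          exact he⟩,
        fun j => ⟨⟨(i, j.1), j.2⟩, rfl⟩, ?_, fun j => rfl⟩
      rintro ⟨⟨⟨i', j⟩, he⟩, hi⟩
      dsimp only at hi
      subst hi
      rfl
    rw [Nat.card_eq_fintype_card, Fintype.card_subtype, Finset.card_filter] at hc
    have hc' := congrArg (Nat.cast : ℕ → ℝ) hc
    push_cast at hc'
    simpa using hc'
  · refine (Finset.sum_eq_zero fun e _ => ?_).trans (by simp)
    rw [if_neg]
    rintro ⟨h1, h2⟩
    exact h (h2.symm.trans h1)

lemma varInc_mul_transpose (q1 : ℕ) (hcol : ∀ j, Nat.card {i : Fin m // H i j = 1} = q1 + 1) :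
    varInc H * (varInc H)ᵀ = ((q1 : ℝ) + 1) • (1 : Matrix (Fin n) (Fin n) ℝ) := by
  ext i i'
  rw [Matrix.mul_apply, Matrix.smul_apply, Matrix.one_apply]
  simp only [varInc, Matrix.transpose_apply, Matrix.of_apply, ← ite_and, mul_ite, mul_one,
    mul_zero]
  split_ifs with h
  · subst h
    have hc : Nat.card {e : TannerEdge H // e.1.2 = i} = q1 + 1 := by
      rw [← hcol i]
      refine Nat.card_congr ⟨fun e => ⟨e.1.1.1, by
          obtain ⟨⟨⟨a, b⟩, he⟩, hi⟩ := e
          subst hi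
          exact he⟩,
        fun j => ⟨⟨(j.1, i), j.2⟩, rfl⟩, ?_, fun j => rfl⟩
      rintro ⟨⟨⟨j, i'⟩, he⟩, hi⟩
      dsimp only at hi
      subst hi
      rfl
    rw [Nat.card_eq_fintype_card, Fintype.card_subtype, Finset.card_filter] at hc
    have hc' := congrArg (Nat.cast : ℕ → ℝ) hc
    push_cast at hc'
    simpa using hc'
  · refine (Finset.sum_eq_zero fun e _ => ?_).trans (by simp)
    rw [if_neg]
    rintro ⟨h1, h2⟩
    exact h (h2.symm.trans h1)

lemma checkGram_apply (e f : TannerEdge H) :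
    ((checkInc H)ᵀ * checkInc H) e f = if e.1.1 = f.1.1 then 1 else 0 := by
  rw [Matrix.mul_apply]
  simp [checkInc, eq_comm]

lemma varGram_apply (e f : TannerEdge H) :
    ((varInc H)ᵀ * varInc H) e f = if e.1.2 = f.1.2 then 1 else 0 := by
  rw [Matrix.mul_apply]
  simp [varInc, eq_comm]

lemma trace_mul_pow_comm {α β : Type*} [Fintype α] [Fintype β] [DecidableEq α] [DecidableEq β]
    (X : Matrix α β ℝ) (Y : Matrix β α ℝ) (k : ℕ) :
    Matrix.trace ((X * Y) ^ (k + 1)) = Matrix.trace ((Y * X) ^ (k + 1)) := by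
  have h : ∀ k, (X * Y) ^ (k + 1) = X * ((Y * X) ^ k * Y) := by
    intro k
    induction k with
    | zero => simp
    | succ k ih => rw [pow_succ', ih, pow_succ' (Y * X) k]; simp only [Matrix.mul_assoc]
  rw [h, Matrix.trace_mul_comm, Matrix.mul_assoc, ← pow_succ]

/-- The product of the two edge Gram matrices has the same traces of powers as `H Hᵀ`. -/
lemma trace_gram_pow (hent : ∀ i j, H i j = 0 ∨ H i j = 1) (k : ℕ) :
    Matrix.trace ((((checkInc H)ᵀ * checkInc H) * ((varInc H)ᵀ * varInc H)) ^ (k + 1)) =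
      Matrix.trace ((H * Hᵀ) ^ (k + 1)) := by
  have h1 := checkInc_mul_varInc H hent
  have h2 : varInc H * (checkInc H)ᵀ = Hᵀ := by
    rw [← congrArg Matrix.transpose h1, Matrix.transpose_mul, Matrix.transpose_transpose]
  rw [Matrix.mul_assoc, ← Matrix.mul_assoc (checkInc H), h1, trace_mul_pow_comm, Matrix.mul_assoc,
    h2]

lemma card_tannerEdge (q1 : ℕ) (hcol : ∀ j, Nat.card {i : Fin m // H i j = 1} = q1 + 1) :
    Fintype.card (TannerEdge H) = n * (q1 + 1) := by
  have e : TannerEdge H ≃ Σ j : Fin n, {i : Fin m // H i j = 1} :=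
    ⟨fun e => ⟨e.1.2, e.1.1, e.2⟩, fun x => ⟨(x.2.1, x.1), x.2.2⟩, fun _ => rfl, fun _ => rfl⟩
  rw [Fintype.card_congr e, Fintype.card_sigma]
  simp only [← Nat.card_eq_fintype_card, hcol]
  simp

lemma trace_mul_transpose_eq_card (hent : ∀ i j, H i j = 0 ∨ H i j = 1) :
    Matrix.trace (H * Hᵀ) = Fintype.card (TannerEdge H) := by
  rw [Fintype.card_subtype, Finset.card_filter, Fintype.sum_prod_type, Matrix.trace]
  push_cast
  refine Finset.sum_congr rfl fun i _ => ?_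
  rw [Matrix.diag_apply, Matrix.mul_apply]
  refine Finset.sum_congr rfl fun j _ => ?_
  rcases hent i j with h | h <;> simp [h]

/-- The darts of the Tanner graph: `inl e` traverses the edge `e` from variable to check,
`inr e` from check to variable. This is the initial vertex of a dart. -/
def dartSrc : TannerEdge H ⊕ TannerEdge H → Fin m ⊕ Fin n
  | Sum.inl e => Sum.inr e.1.2
  | Sum.inr e => Sum.inl e.1.1

/-- The terminal vertex of a dart. -/
def dartTgt : TannerEdge H ⊕ TannerEdge H → Fin m ⊕ Fin n
  | Sum.inl e => Sum.inl e.1.1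
  | Sum.inr e => Sum.inr e.1.2

/-- The second dart continues the first one without backtracking. -/
def DartNext (d d' : TannerEdge H ⊕ TannerEdge H) : Prop :=
  dartTgt H d = dartSrc H d' ∧ dartSrc H d ≠ dartTgt H d'

lemma dart_ext {d d' : TannerEdge H ⊕ TannerEdge H} (h1 : dartSrc H d = dartSrc H d')
    (h2 : dartTgt H d = dartTgt H d') : d = d' := by
  rcases d with ⟨⟨i, j⟩, he⟩ | ⟨⟨i, j⟩, he⟩ <;> rcases d' with ⟨⟨i', j'⟩, he'⟩ | ⟨⟨i', j'⟩, he'⟩ <;>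
    simp_all [dartSrc, dartTgt]

lemma tannerGraph_adj_iff (u v : Fin m ⊕ Fin n) :
    (tannerGraph H).Adj u v ↔ ∃ d, dartSrc H d = u ∧ dartTgt H d = v := by
  rw [tannerGraph, SimpleGraph.fromRel_adj]
  constructor
  · rintro ⟨-, ⟨i, j, rfl, rfl, h⟩ | ⟨i, j, rfl, rfl, h⟩⟩
    · exact ⟨Sum.inr ⟨(i, j), h⟩, rfl, rfl⟩
    · exact ⟨Sum.inl ⟨(i, j), h⟩, rfl, rfl⟩
  · rintro ⟨e | e, rfl, rfl⟩
    · exact ⟨by simp [dartSrc, dartTgt], .inr ⟨e.1.1, e.1.2, rfl, rfl, e.2⟩⟩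
    · exact ⟨by simp [dartSrc, dartTgt], .inl ⟨e.1.1, e.1.2, rfl, rfl, e.2⟩⟩

/-- Periodic nonbacktracking sequences of darts correspond to those of vertices, a dart sequence
being sent to the sequence of its initial vertices. -/
lemma card_dartSeq_eq (l : ℕ) :
    Nat.card {d : ℕ → TannerEdge H ⊕ TannerEdge H //
        (∀ i, d (i + l) = d i) ∧ ∀ i, DartNext H (d i) (d (i + 1))} =
      Nat.card {f : ℕ → Fin m ⊕ Fin n // (∀ i, f (i + l) = f i) ∧
        (∀ i, (tannerGraph H).Adj (f i) (f (i + 1))) ∧ ∀ i, f i ≠ f (i + 2)} := by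
  refine Nat.card_eq_of_bijective (fun d => ⟨fun i => dartSrc H (d.1 i), ?_, ?_, ?_⟩) ⟨?_, ?_⟩
  · intro i
    simp only [d.2.1 i]
  · intro i
    exact (tannerGraph_adj_iff H _ _).mpr ⟨d.1 i, rfl, (d.2.2 i).1⟩
  · intro i
    have := (d.2.2 i).2
    rwa [(d.2.2 (i + 1)).1] at this
  · rintro ⟨d, hd, hd1⟩ ⟨d', hd', hd1'⟩ h
    have h' : ∀ i, dartSrc H (d i) = dartSrc H (d' i) := fun i =>
      congrFun (congrArg Subtype.val h) i
    apply Subtype.ext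
    funext i
    exact dart_ext H (h' i) (by rw [(hd1 i).1, (hd1' i).1, h'])
  · rintro ⟨f, hper, hadj, hnb⟩
    choose d hs ht using fun i => (tannerGraph_adj_iff H _ _).mp (hadj i)
    refine ⟨⟨d, fun i => dart_ext H ?_ ?_, fun i => ⟨?_, ?_⟩⟩, Subtype.ext (funext hs)⟩
    · rw [hs, hs, hper]
    · rw [ht, ht, add_right_comm, hper]
    · rw [ht, hs]
    · rw [hs, ht]
      exact hnb i

open Classical in
/-- The nonbacktracking matrix in block form: consecutive darts have opposite directions, and two
distinct edges with a common check (variable) give an entry of `P - 1` (of `Q - 1`). -/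
lemma dartMatrix_eq :
    (Matrix.of fun d d' => if DartNext H d d' then (1 : ℝ) else 0) =
      Matrix.fromBlocks 0 ((checkInc H)ᵀ * checkInc H - 1) ((varInc H)ᵀ * varInc H - 1) 0 := by
  ext d d'
  rcases d with e | e <;> rcases d' with f | f
  · simp [DartNext, dartSrc, dartTgt]
  · rw [Matrix.fromBlocks_apply₁₂, Matrix.sub_apply, checkGram_apply, Matrix.one_apply]
    rcases e with ⟨⟨i, j⟩, he⟩
    rcases f with ⟨⟨i', j'⟩, he'⟩
    by_cases h1 : i = i' <;> by_cases h2 : j = j' <;> simp [DartNext, dartSrc, dartTgt, h1, h2]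
  · rw [Matrix.fromBlocks_apply₂₁, Matrix.sub_apply, varGram_apply, Matrix.one_apply]
    rcases e with ⟨⟨i, j⟩, he⟩
    rcases f with ⟨⟨i', j'⟩, he'⟩
    by_cases h1 : i = i' <;> by_cases h2 : j = j' <;> simp [DartNext, dartSrc, dartTgt, h1, h2]
  · simp [DartNext, dartSrc, dartTgt]

/-- The square of the off-diagonal block matrix is block diagonal with blocks `P Q` and `Q P`,
whose powers have the same trace. -/
lemma trace_fromBlocks_pow {α : Type*} [Fintype α] [DecidableEq α] (P Q : Matrix α α ℝ) (k : ℕ) :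
    Matrix.trace ((Matrix.fromBlocks 0 P Q 0) ^ (2 * (k + 1))) =
      2 * Matrix.trace ((P * Q) ^ (k + 1)) := by
  have h : ∀ k, (Matrix.fromBlocks (P * Q) 0 0 (Q * P)) ^ k =
      Matrix.fromBlocks ((P * Q) ^ k) 0 0 ((Q * P) ^ k) := by
    intro k
    induction k with
    | zero => simp [Matrix.fromBlocks_one]
    | succ k ih => simp [pow_succ, ih, Matrix.fromBlocks_multiply]
  rw [pow_mul, pow_two, Matrix.fromBlocks_multiply]
  simp only [Matrix.zero_mul, Matrix.mul_zero, zero_add, add_zero]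
  rw [h, two_mul]
  nth_rewrite 2 [trace_mul_pow_comm P Q]
  simp [Matrix.trace, Fintype.sum_sum_type]

/-- Below length 16 the rooted oriented cycles of a Tanner graph of girth at least 8 are exactly the
cyclic nonbacktracking walks, which the traces of the nonbacktracking matrix count. -/
lemma two_mul_trace_eq_cycleCount (hg : (8 : ℕ∞) ≤ (tannerGraph H).egirth) (k : ℕ) (hk : 1 ≤ k)
    (hk' : k ≤ 6) :
    (2 : ℝ) * Matrix.trace
        ((((checkInc H)ᵀ * checkInc H - 1) * ((varInc H)ᵀ * varInc H - 1)) ^ (k + 1)) =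
      ((cycleCount (tannerGraph H) (2 * (k + 1)) : ℕ) : ℝ) := by
  classical
  rw [cycleCount_eq_card_nonbacktracking 8 _ (by exact_mod_cast hg) (by omega) (by omega),
    ← card_dartSeq_eq, ← trace_pow_eq_card_s8 (DartNext H) _ (by omega), ← trace_fromBlocks_pow,
    ← dartMatrix_eq]

end Tanner

/-! ### The number of 12-cycles -/

/-- Corollary 4(3), first formula: the number of 12-cycles `N_12` in terms of
`N_10`, `N_8` and `T_6 = trace((H Hᵀ)⁶)`. -/
theorem twelve_cycles
    (q1 q2 m n : ℕ) (hq1 : 1 ≤ q1) (hq12 : q1 ≤ q2) (hq2 : 2 ≤ q2)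
    (hm : 0 < m) (hn : 0 < n)
    (H : Matrix (Fin m) (Fin n) ℝ)
    (hent : ∀ i j, H i j = 0 ∨ H i j = 1)
    (hcol : ∀ j, Nat.card {i : Fin m // H i j = 1} = q1 + 1)
    (hrow : ∀ i, Nat.card {j : Fin n // H i j = 1} = q2 + 1)
    (hconn : (tannerGraph H).Connected)
    (hg : (8 : ℕ∞) ≤ (tannerGraph H).egirth) :
    let s : ℝ := (q1 : ℝ) + q2
    let c : ℝ := (q1 : ℝ) * q2
    let A4 : ℝ := (q1 : ℝ) + q2 + 1
    let A6 : ℝ := ((q1 : ℝ) + q2 + 1) ^ 2 + c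
    let A8 : ℝ := ((q1 : ℝ) + q2 + 1) ^ 3 + c * (3 * q1 + 3 * q2 + 2)
    let A10 : ℝ := -1 + ((q1 : ℝ) ^ 4 - (q1 : ℝ) ^ 3 + (q1 : ℝ) ^ 2 - q1 + 1)
        + ((q2 : ℝ) ^ 4 - (q2 : ℝ) ^ 3 + (q2 : ℝ) ^ 2 - q2 + 1)
        - 5 * (∑ j ∈ Finset.range 5, (q1 : ℝ) ^ j * (q2 : ℝ) ^ (4 - j))
        + 5 * s * A8 - (10 * s ^ 2 - 5 * c) * A6 + (10 * s ^ 3 - 15 * c * s) * A4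
    let A12 : ℝ := -1 - ((q1 : ℝ) ^ 5 - (q1 : ℝ) ^ 4 + (q1 : ℝ) ^ 3 - (q1 : ℝ) ^ 2 + q1 - 1)
        - ((q2 : ℝ) ^ 5 - (q2 : ℝ) ^ 4 + (q2 : ℝ) ^ 3 - (q2 : ℝ) ^ 2 + q2 - 1)
        + 6 * (∑ j ∈ Finset.range 6, (q1 : ℝ) ^ j * (q2 : ℝ) ^ (5 - j))
        + 6 * s * A10 - (15 * s ^ 2 - 6 * c) * A8 + (20 * s ^ 3 - 24 * c * s) * A6
        - (15 * s ^ 4 - 36 * c * s ^ 2 + 9 * c ^ 2) * A4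
    let A14 : ℝ := -1 + ((q1 : ℝ) ^ 6 - (q1 : ℝ) ^ 5 + (q1 : ℝ) ^ 4 - (q1 : ℝ) ^ 3 + (q1 : ℝ) ^ 2 - q1 + 1)
        + ((q2 : ℝ) ^ 6 - (q2 : ℝ) ^ 5 + (q2 : ℝ) ^ 4 - (q2 : ℝ) ^ 3 + (q2 : ℝ) ^ 2 - q2 + 1)
        - 7 * (∑ j ∈ Finset.range 7, (q1 : ℝ) ^ j * (q2 : ℝ) ^ (6 - j))
        + 7 * s * A12 - (21 * s ^ 2 - 7 * c) * A10 + (35 * s ^ 3 - 35 * c * s) * A8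
        - (35 * s ^ 4 - 70 * c * s ^ 2 + 14 * c ^ 2) * A6
        + (21 * s ^ 5 - 70 * c * s ^ 3 + 42 * c ^ 2 * s) * A4
    numCycles (tannerGraph H) 6 =
      -5 * s * numCycles (tannerGraph H) 5
      - 2 * (5 * s ^ 2 + 2 * c) * numCycles (tannerGraph H) 4
      + (Matrix.trace ((H * H.transpose) ^ 6) - ((n * (q1 + 1) : ℕ) : ℝ) * A12) / 12 := by
  intro s c A4 A6 A8 A10 A12 A14
  set P := (checkInc H)ᵀ * checkInc H with hP
  set Q := (varInc H)ᵀ * varInc H with hQ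
  have hPP : P * P = ((q2 : ℝ) + 1) • P := by
    rw [hP, Matrix.mul_assoc, ← Matrix.mul_assoc (checkInc H), checkInc_mul_transpose H q2 hrow]
    simp
  have hQQ : Q * Q = ((q1 : ℝ) + 1) • Q := by
    rw [hQ, Matrix.mul_assoc, ← Matrix.mul_assoc (varInc H), varInc_mul_transpose H q1 hcol]
    simp
  have hcard := card_tannerEdge H q1 hcol
  have htr1 : Matrix.trace (1 : Matrix (TannerEdge H) (TannerEdge H) ℝ) = ((n * (q1 + 1) : ℕ) : ℝ) := by
    rw [Matrix.trace_one, hcard]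
  have htrP : Matrix.trace P = ((n * (q1 + 1) : ℕ) : ℝ) := by
    rw [← htr1]
    refine Finset.sum_congr rfl fun e _ => ?_
    rw [Matrix.diag_apply, Matrix.diag_apply, hP, checkGram_apply]
    simp
  have htrQ : Matrix.trace Q = ((n * (q1 + 1) : ℕ) : ℝ) := by
    rw [← htr1]
    refine Finset.sum_congr rfl fun e _ => ?_
    rw [Matrix.diag_apply, Matrix.diag_apply, hQ, varGram_apply]
    simp
  have htrPQ : Matrix.trace (P * Q) = ((n * (q1 + 1) : ℕ) : ℝ) := by
    have := trace_gram_pow H hent 0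
    rw [zero_add, pow_one, pow_one, trace_mul_transpose_eq_card H hent, hcard] at this
    exact this
  have hcyc := fun k h1 h2 => two_mul_trace_eq_cycleCount H hg k h1 h2
  have h4 : cycleCount (tannerGraph H) 4 = 0 :=
    cycleCount_eq_zero_s8 4 (lt_of_lt_of_le (by norm_num) hg)
  have h6 : cycleCount (tannerGraph H) 6 = 0 :=
    cycleCount_eq_zero_s8 6 (lt_of_lt_of_le (by norm_num) hg)
  have key := hecke_trace (Matrix.traceLinearMap (TannerEdge H) ℝ ℝ)
    (fun x y => Matrix.trace_mul_comm x y) (q1 : ℝ) (q2 : ℝ) _ P Q hPP hQQ htr1 htrP htrQ htrPQ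
    (numCycles (tannerGraph H) 4) (numCycles (tannerGraph H) 5) (numCycles (tannerGraph H) 6)
    (by
      have := hcyc 1 (by norm_num) (by norm_num)
      simp only [Nat.reduceAdd, Nat.reduceMul, h4] at this
      rw [Matrix.traceLinearMap_apply]
      push_cast at this
      linarith)
    (by
      have := hcyc 2 (by norm_num) (by norm_num)
      simp only [Nat.reduceAdd, Nat.reduceMul, h6] at this
      rw [Matrix.traceLinearMap_apply]
      push_cast at this
      linarith)
    (by
      have := hcyc 3 (by norm_num) (by norm_num)
      simp only [Nat.reduceAdd, Nat.reduceMul] at this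
      rw [Matrix.traceLinearMap_apply, numCycles]
      push_cast
      linarith)
    (by
      have := hcyc 4 (by norm_num) (by norm_num)
      simp only [Nat.reduceAdd, Nat.reduceMul] at this
      rw [Matrix.traceLinearMap_apply, numCycles]
      push_cast
      linarith)
    (by
      have := hcyc 5 (by norm_num) (by norm_num)
      simp only [Nat.reduceAdd, Nat.reduceMul] at this
      rw [Matrix.traceLinearMap_apply, numCycles]
      push_cast
      linarith)
  rw [Matrix.traceLinearMap_apply, hP, hQ, trace_gram_pow H hent 5] at key
  have hA12 : A12 = ((q1 : ℝ) + q2 + 1) ^ 5 + (q1 : ℝ) * q2 * (10 * ((q1 : ℝ) + q2) ^ 3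
      + 20 * ((q1 : ℝ) + q2) ^ 2 + 15 * ((q1 : ℝ) + q2) + 4)
      + ((q1 : ℝ) * q2) ^ 2 * (10 * ((q1 : ℝ) + q2) + 5) := by
    simp only [A12, A10, A8, A6, A4, s, c, Finset.sum_range_succ, Finset.sum_range_zero]
    norm_num
    ring
  rw [hA12, key]
  simp only [s, c]
  ring
end

section
/- Let n ≥ 3 be an odd integer and let e : ZMod n → ZMod n be a function with e(0) = 0 such that e is a bijection of ZMod n and the map j ↦ j − e(j) is also a bijection of ZMod n. For ℓ ∈ ZMod n let P_ℓ be the n × n real matrix with (P_ℓ)_{r,s} = 1 if s = r + ℓ and 0 otherwise (a circulant permutation matrix). Let H be the 3n × n² real block matrix, indexed by (Fin 3 × ZMod n) × (ZMod n × ZMod n), whose (a, j) block (a ∈ Fin 3, j ∈ ZMod n) is P_0 if a = 0, P_j if a = 1, and P_{e(j)} if a = 2. Then the characteristic polynomial of H·Hᵀ equals t²·(t − 3n)·(t − n)^{3n−3}; in particular H·Hᵀ has eigenvalue 3n with multiplicity 1, eigenvalue n with multiplicity 3(n−1), eigenvalue 0 with multiplicity 2, and the rank of H equals 3n − 2. 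-/
/-!
The block `(a, b)` of `H Hᵀ` is `∑ⱼ P_{σ a j} P_{σ b j}ᵀ`, where `σ a j` is the shift in block
`(a, j)` of `H`. For `a = b` this is `n • 1`. For `a ≠ b` the bijectivity of `j ↦ σ a j - σ b j`
makes each entry exactly `1`, so the block is the all-ones matrix (`gram_apply`).

Hence `H Hᵀ - n • 1` is the all-ones matrix off the diagonal blocks and zero on them. It
factors as `U V` through `ℝ³`, and `V U` is the `3 × 3` matrix with `0` on the diagonal and
`n` elsewhere, whose characteristic polynomial is `(X - 2n)(X + n)²`. Comparing the
characteristic polynomials of `U V` and `V U` and translating by `n` gives that of `H Hᵀ`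
(`charpoly_of_blocks`).

The multiplicities are read off from the factorization. As `H Hᵀ` is symmetric, its rank is the
number of nonzero roots of its characteristic polynomial (`rank_add_rootMultiplicity_zero`),
and it equals the rank of `H`.
-/

open Matrix Polynomial

/-- Gram matrix of an array of `3 × |G|` circulant blocks with shifts `σ a j`, when any two
distinct block rows have bijective shift difference. -/
lemma gram_apply {G : Type*} [AddCommGroup G] [Fintype G] [DecidableEq G]
    (σ : Fin 3 → G → G)
    (hσ : ∀ a b, a ≠ b → Function.Bijective fun j => σ a j - σ b j)
    (H : Matrix (Fin 3 × G) (G × G) ℝ)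
    (hH : ∀ x y, H x y = if y.2 = x.2 + σ x.1 y.1 then 1 else 0) (x y : Fin 3 × G) :
    (H * Hᵀ) x y =
      if x.1 = y.1 then (if x.2 = y.2 then (Fintype.card G : ℝ) else 0) else 1 := by
  have h1 : (H * Hᵀ) x y = ∑ j, if x.2 + σ x.1 j = y.2 + σ y.1 j then (1 : ℝ) else 0 := by
    rw [Matrix.mul_apply, Fintype.sum_prod_type]
    refine Finset.sum_congr rfl fun j _ => ?_
    simp [hH, eq_comm]
  rw [h1]
  split_ifs with h h2
  · simp [h, h2]
  · simp [h, h2]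
  · -- the only contributing `j` is the preimage of `y.2 - x.2` under the shift difference
    obtain ⟨j, hj, hu⟩ := (hσ _ _ h).existsUnique (y.2 - x.2)
    rw [Finset.sum_eq_single j]
    · rw [if_pos]
      have : σ x.1 j - σ y.1 j = y.2 - x.2 := hj
      rw [sub_eq_sub_iff_add_eq_add] at this
      rw [add_comm, this]
    · intro k _ hk
      rw [if_neg]
      intro hk'
      refine hk (hu k ?_)
      change σ x.1 k - σ y.1 k = y.2 - x.2
      rw [sub_eq_sub_iff_add_eq_add, add_comm, hk']
    · simp

lemma charpoly_of_blocks {G : Type*} [Fintype G] [DecidableEq G] [Nonempty G]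
    (M : Matrix (Fin 3 × G) (Fin 3 × G) ℝ)
    (hM : ∀ x y, M x y =
      if x.1 = y.1 then (if x.2 = y.2 then (Fintype.card G : ℝ) else 0) else 1) :
    M.charpoly = X ^ 2 * (X - C ((3 * Fintype.card G : ℕ) : ℝ)) *
      (X - C (Fintype.card G : ℝ)) ^ (3 * Fintype.card G - 3) := by
  set n := Fintype.card G with hn
  have hpos : 0 < n := Fintype.card_pos
  let U : Matrix (Fin 3 × G) (Fin 3) ℝ := .of fun x b => if x.1 = b then 0 else 1
  let V : Matrix (Fin 3) (Fin 3 × G) ℝ := .of fun b y => if b = y.1 then 1 else 0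
  have hUV : U * V = M - scalar _ (n : ℝ) := by
    ext x y
    obtain ⟨a, r⟩ := x
    obtain ⟨b, s⟩ := y
    rw [Matrix.sub_apply, Matrix.scalar_apply, Matrix.diagonal_apply]
    by_cases hab : a = b <;> by_cases hrs : r = s <;>
      simp [Matrix.mul_apply, U, V, hM, hab, hrs]
  have hVU : V * U = !![0, (n : ℝ), n; n, 0, n; n, n, 0] := by
    ext a b
    simp only [Matrix.mul_apply, Fintype.sum_prod_type, U, V, of_apply, Fin.sum_univ_three]
    fin_cases a <;> fin_cases b <;> simp [hn]
  have hc : (V * U).charpoly = (X - C (2 * n : ℝ)) * (X + C (n : ℝ)) ^ 2 := by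
    rw [hVU, Matrix.charpoly, Matrix.det_fin_three]
    simp [show (C 2 : ℝ[X]) = 2 from rfl]
    ring
  have h1 := charpoly_mul_comm_of_le U V (by simp; omega)
  rw [hUV, hc, charpoly_sub_scalar] at h1
  have h2 := congrArg (fun p => p.comp (X - C (n : ℝ))) h1
  simp only [comp_assoc, add_comp, X_comp, C_comp, sub_add_cancel, comp_X, mul_comp, pow_comp,
    sub_comp] at h2
  rw [h2]
  simp [← hn, show (C 2 : ℝ[X]) = 2 from rfl, show (C 3 : ℝ[X]) = 3 from rfl]
  ring

lemma rank_add_rootMultiplicity_zero {ι : Type*} [Fintype ι] [DecidableEq ι]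
    {A : Matrix ι ι ℝ} (hA : A.IsHermitian) :
    A.rank + A.charpoly.rootMultiplicity 0 = Fintype.card ι := by
  classical
  rw [hA.rank_eq_card_non_zero_eigs, ← count_roots, hA.roots_charpoly_eq_eigenvalues,
    Multiset.count_map, Fintype.card_subtype, ← Finset.card_univ,
    ← Finset.card_filter_add_card_filter_not (s := Finset.univ) (fun i => hA.eigenvalues i ≠ 0)]
  congr 1
  simp [Finset.card_def, eq_comm]

lemma rootMultiplicity_of_factorization (n : ℕ) (hn : 0 < n) :
    let p : ℝ[X] := X ^ 2 * (X - C ((3 * n : ℕ) : ℝ)) * (X - C (n : ℝ)) ^ (3 * n - 3)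
    p.rootMultiplicity ((3 * n : ℕ) : ℝ) = 1 ∧ p.rootMultiplicity (n : ℝ) = 3 * (n - 1) ∧
      p.rootMultiplicity 0 = 2 := by
  intro p
  have hroots : p.roots = 2 • {0} + {((3 * n : ℕ) : ℝ)} + (3 * n - 3) • {(n : ℝ)} := by
    have h2 : (X ^ 2 * (X - C ((3 * n : ℕ) : ℝ)) : ℝ[X]) ≠ 0 :=
      mul_ne_zero (pow_ne_zero _ X_ne_zero) (X_sub_C_ne_zero _)
    have h3 : ((X - C (n : ℝ)) ^ (3 * n - 3) : ℝ[X]) ≠ 0 := pow_ne_zero _ (X_sub_C_ne_zero _)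
    rw [roots_mul (mul_ne_zero h2 h3), roots_mul h2, roots_X_pow, roots_pow, roots_X_sub_C,
      roots_X_sub_C]
  have hn' : (n : ℝ) ≠ 0 := by positivity
  have h3n : (3 * n : ℝ) ≠ n := by intro h; apply hn'; linarith
  refine ⟨?_, ?_, ?_⟩ <;> rw [← count_roots, hroots] <;>
    simp [hn', h3n, h3n.symm, hn'.symm]
  omega

/-- Example 2 of the paper: eigenvalue computation for the girth-6 quasi-cyclic codes
with polynomial parity-check matrix rows `(1,…,1)`, `(1, x, …, x^{n-1})`,
`(1, x^{e(1)}, …, x^{e(n-1)})` modulo `x^n - 1`: the characteristic polynomial of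
`H Hᵀ` is `t²·(t − 3n)·(t − n)^{3n−3}`, the eigenvalues `3n`, `n`, `0` have
multiplicities `1`, `3(n−1)`, `2`, and `rank H = 3n − 2`. -/
theorem example2_charpoly (n : ℕ) (hn : 3 ≤ n) (hodd : Odd n)
    (e : ZMod n → ZMod n) (he0 : e 0 = 0) (hbij : Function.Bijective e)
    (hbij' : Function.Bijective fun j : ZMod n => j - e j) :
    letI : NeZero n := ⟨by omega⟩
    let P : ZMod n → Matrix (ZMod n) (ZMod n) ℝ :=
      fun ℓ r s => if s = r + ℓ then 1 else 0
    let H : Matrix (Fin 3 × ZMod n) (ZMod n × ZMod n) ℝ :=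
      fun x y => if x.1 = 0 then P 0 x.2 y.2 else if x.1 = 1 then P y.1 x.2 y.2
        else P (e y.1) x.2 y.2
    ((H * H.transpose).charpoly =
        X ^ 2 * (X - C ((3 * n : ℕ) : ℝ)) * (X - C (n : ℝ)) ^ (3 * n - 3)
      ∧ ((H * H.transpose).charpoly).rootMultiplicity ((3 * n : ℕ) : ℝ) = 1
      ∧ ((H * H.transpose).charpoly).rootMultiplicity ((n : ℕ) : ℝ) = 3 * (n - 1)
      ∧ ((H * H.transpose).charpoly).rootMultiplicity 0 = 2
      ∧ H.rank = 3 * n - 2) := by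
  intro P H
  have : NeZero n := ⟨by omega⟩
  let σ : Fin 3 → ZMod n → ZMod n := ![fun _ => 0, id, e]
  have hneg : Function.Bijective fun j : ZMod n => e j - j := by
    simpa [Function.comp_def] using (Equiv.neg (ZMod n)).bijective.comp hbij'
  have hσ : ∀ a b, a ≠ b → Function.Bijective fun j => σ a j - σ b j := by
    have h01 : Function.Bijective fun j : ZMod n => 0 - j := by
      simp only [zero_sub]
      exact (Equiv.neg (ZMod n)).bijective
    have h10 : Function.Bijective fun j : ZMod n => j - 0 := by
      simp only [sub_zero]
      exact Function.bijective_id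
    have h02 : Function.Bijective fun j : ZMod n => 0 - e j := h01.comp hbij
    have h20 : Function.Bijective fun j : ZMod n => e j - 0 := h10.comp hbij
    intro a b hab
    fin_cases a <;> fin_cases b
    exacts [absurd rfl hab, h01, h02, h10, absurd rfl hab, hbij', h20, hneg, absurd rfl hab]
  have hH : ∀ x y, H x y = if y.2 = x.2 + σ x.1 y.1 then 1 else 0 := by
    rintro ⟨a, r⟩ ⟨j, s⟩
    fin_cases a <;> simp [H, P, σ]
  have hcard : Fintype.card (ZMod n) = n := ZMod.card n
  have hchar := charpoly_of_blocks (H * Hᵀ) (gram_apply σ hσ H hH)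
  rw [hcard] at hchar
  obtain ⟨m1, m2, m3⟩ := rootMultiplicity_of_factorization n (by omega)
  rw [← hchar] at m1 m2 m3
  refine ⟨hchar, m1, m2, m3, ?_⟩
  have hr := rank_add_rootMultiplicity_zero (isHermitian_mul_conjTranspose_self H)
  rw [conjTranspose_eq_transpose_of_trivial, m3, rank_self_mul_transpose] at hr
  simp only [Fintype.card_prod, Fintype.card_fin, hcard] at hr
  omega
end
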